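/- arXiv:1304.6605 — 2 statements merged into one kernel-verified Lean document; each statement's English description precedes it below -/
import Mathlib

section
/- Let X be a complex Banach space with open unit ball B and let G : B → X be an infinitesimal generator with homogeneous expansion G(z) = G(0) + Tz + Σ_{j≥2} Q_j(z) (T = DG(0), Q_j continuous homogeneous polynomials of degree j). Then for every unit vector v and supporting functional v*: |⟨Q_2(v), v*⟩| ≤ ‖G(0)‖ − 2·Re⟨Tv, v*⟩, and |⟨Q_j(v), v*⟩| ≤ −2·Re⟨Tv, v*⟩ for all j ≥ 3. -/
open Complex Metric

/-!
Composing a generator `G` with a supporting functional `v*` along the disc `ζ ↦ ζ v` gives a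
generator `g ζ = ⟨G (ζ v), v*⟩` of the unit disc, whose Taylor coefficients are `⟨Q_j v, v*⟩`. The
generator inequality says that the function `p` in the Berkson-Porta decomposition
`g ζ = g 0 - conj (g 0) ζ² - ζ p ζ` has nonnegative real part. Up to sign, the `n`-th coefficient of
`p` is the `(n + 1)`-st coefficient of `g`, with `conj (g 0)` added for `n = 1`, and Carathéodory's
inequality bounds it by `2 Re p(0) = -2 Re ⟨T v, v*⟩`.
-/

open Real (circleAverage)
open scoped Nat Topology ComplexConjugate

section TaylorCoefficients

variable {𝕜 : Type*} [NontriviallyNormedField 𝕜] [CompleteSpace 𝕜] [CharZero 𝕜]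

lemma iteratedDeriv_div_factorial_eq_coeff {f : 𝕜 → 𝕜} {p : FormalMultilinearSeries 𝕜 𝕜 𝕜} {c : 𝕜}
    (hp : HasFPowerSeriesAt f p c) (n : ℕ) : iteratedDeriv n f c / n ! = p.coeff n := by
  rw [hp.eq_formalMultilinearSeries hp.analyticAt.hasFPowerSeriesAt,
    FormalMultilinearSeries.coeff_ofScalars]

lemma iteratedDeriv_dslope_div_factorial {f : 𝕜 → 𝕜} {c : 𝕜} (hf : AnalyticAt 𝕜 f c) (n : ℕ) :
    iteratedDeriv n (dslope f c) c / n ! = iteratedDeriv (n + 1) f c / (n + 1)! := by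
  obtain ⟨p, hp⟩ := hf
  rw [iteratedDeriv_div_factorial_eq_coeff hp.has_fpower_series_dslope_fslope,
    iteratedDeriv_div_factorial_eq_coeff hp, FormalMultilinearSeries.coeff_fslope]

end TaylorCoefficients

lemma hasFPowerSeriesOnBall_ofScalars_of_hasSum {𝕜 : Type*} [RCLike 𝕜] {a : ℕ → 𝕜} {f : 𝕜 → 𝕜}
    {r : ENNReal} (hr : 0 < r)
    (h : ∀ x ∈ eball (0 : 𝕜) r, HasSum (fun k ↦ a k * x ^ k) (f x)) :
    HasFPowerSeriesOnBall f (.ofScalars 𝕜 a) 0 r where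
  r_le := by
    refine ENNReal.le_of_forall_nnreal_lt fun s hs ↦ ?_
    have hmem : ((s : ℝ) : 𝕜) ∈ eball (0 : 𝕜) r := by simpa [← ofReal_norm] using hs
    refine FormalMultilinearSeries.le_radius_of_summable_norm _ ?_
    simpa using (h _ hmem).summable.norm
  r_pos := hr
  hasSum {x} hx := by
    simpa [FormalMultilinearSeries.ofScalars_apply_eq, mul_comm] using h x hx

section CircleAverage

variable {c : ℂ} {r : ℝ} {f : ℂ → ℂ} {n : ℕ}

lemma norm_circleAverage_le_circleAverage_norm {E : Type*} [NormedAddCommGroup E] [NormedSpace ℝ E]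
    (f : ℂ → E) (c : ℂ) (r : ℝ) : ‖circleAverage f c r‖ ≤ circleAverage (fun z ↦ ‖f z‖) c r := by
  rw [Real.circleAverage_def, Real.circleAverage_def, norm_smul, smul_eq_mul,
    Real.norm_of_nonneg (by positivity)]
  gcongr
  exact intervalIntegral.norm_integral_le_integral_norm Real.two_pi_pos.le

lemma circleAverage_inv_pow_mul (hr : 0 < r) (hf : DiffContOnCl ℂ f (ball c r)) (n : ℕ) :
    circleAverage (fun z ↦ ((z - c) ^ n)⁻¹ * f z) c r = iteratedDeriv n f c / n ! := by
  have hcauchy := hf.circleIntegral_one_div_sub_center_pow_smul hr n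
  simp only [one_div, pow_succ', mul_inv, mul_smul] at hcauchy
  simp only [← smul_eq_mul (a := ((_ - c) ^ n)⁻¹)]
  rw [Real.circleAverage_eq_circleIntegral hr.ne', hcauchy, smul_smul, smul_eq_mul]
  field

lemma circleAverage_pow_mul_eq_zero (hr : 0 < r) (hf : DiffContOnCl ℂ f (ball c r)) (hn : n ≠ 0) :
    circleAverage (fun z ↦ (z - c) ^ n * f z) c r = 0 := by
  have hd : DiffContOnCl ℂ (fun z ↦ (z - c) ^ n * f z) (ball c |r|) := by
    rw [abs_of_pos hr]
    exact (by fun_prop : Differentiable ℂ fun z ↦ (z - c) ^ n).diffContOnCl.smul hf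
  simpa [hn] using hd.circleAverage

lemma circleIntegrable_inv_pow_mul (hr : 0 < r) (hf : ContinuousOn f (sphere c r)) (n : ℕ) :
    CircleIntegrable (fun z ↦ ((z - c) ^ n)⁻¹ * f z) c r := by
  refine ContinuousOn.circleIntegrable hr.le (.mul (.inv₀ (by fun_prop) fun z hz ↦ ?_) hf)
  exact pow_ne_zero n (sub_ne_zero.2 (ne_of_mem_sphere hz hr.ne'))

-- On the circle `((z - c) ^ n)⁻¹` is a multiple of `conj ((z - c) ^ n)`, so this is a multiple of
-- the conjugate of the vanishing mean of `(z - c) ^ n * f z`.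
lemma circleAverage_inv_pow_mul_conj_eq_zero (hr : 0 < r) (hf : DiffContOnCl ℂ f (ball c r))
    (hn : n ≠ 0) : circleAverage (fun z ↦ ((z - c) ^ n)⁻¹ * conj (f z)) c r = 0 := by
  have hreflect : Set.EqOn (fun z ↦ ((z - c) ^ n)⁻¹ * conj (f z))
      (fun z ↦ (((r ^ n) ^ 2 : ℝ) : ℂ)⁻¹ • conj ((z - c) ^ n * f z)) (sphere c |r|) := fun z hz ↦ by
    have hz' : ‖z - c‖ = r := by rwa [mem_sphere_iff_norm, abs_of_pos hr] at hz
    simp only [inv_def ((z - c) ^ n), normSq_eq_norm_sq, norm_pow, hz', map_mul, smul_eq_mul,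
      ofReal_inv]
    ring
  have hint : CircleIntegrable (fun z ↦ (z - c) ^ n * f z) c r :=
    ContinuousOn.circleIntegrable hr.le
      (.mul (by fun_prop) (hf.continuousOn_ball.mono sphere_subset_closedBall))
  have hconj := (conjCLE : ℂ →L[ℝ] ℂ).circleAverage_comp_comm hint
  rw [circleAverage_pow_mul_eq_zero hr hf hn, map_zero] at hconj
  rw [Real.circleAverage_congr_sphere hreflect, Real.circleAverage_fun_smul, smul_eq_zero]
  exact .inr hconj

lemma circleAverage_inv_pow_mul_two_re (hr : 0 < r) (hf : DiffContOnCl ℂ f (ball c r))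
    (hn : n ≠ 0) :
    circleAverage (fun z ↦ ((z - c) ^ n)⁻¹ * (2 * (f z).re : ℝ)) c r
      = iteratedDeriv n f c / n ! := by
  have hcont : ContinuousOn f (sphere c r) := hf.continuousOn_ball.mono sphere_subset_closedBall
  have hconj : ContinuousOn (fun z ↦ conj (f z)) (sphere c r) :=
    continuous_conj.comp_continuousOn hcont
  simp only [← add_conj, mul_add]
  rw [Real.circleAverage_fun_add (circleIntegrable_inv_pow_mul hr hcont n)
      (circleIntegrable_inv_pow_mul hr hconj n),
    circleAverage_inv_pow_mul hr hf, circleAverage_inv_pow_mul_conj_eq_zero hr hf hn, add_zero]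

lemma circleAverage_re (hr : 0 < r) (hf : DiffContOnCl ℂ f (ball c r)) :
    circleAverage (fun z ↦ (f z).re) c r = (f c).re := by
  have hint : CircleIntegrable f c r :=
    (hf.continuousOn_ball.mono sphere_subset_closedBall).circleIntegrable hr.le
  have hmean : circleAverage f c r = f c := DiffContOnCl.circleAverage (by rwa [abs_of_pos hr])
  rw [← hmean]
  exact reCLM.circleAverage_comp_comm hint

lemma norm_iteratedDeriv_div_factorial_le_of_re_nonneg_sphere (hr : 0 < r)
    (hf : DiffContOnCl ℂ f (ball c r)) (hre : ∀ z ∈ sphere c r, 0 ≤ (f z).re) (hn : n ≠ 0) :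
    ‖iteratedDeriv n f c / (n !)‖ ≤ 2 * (f c).re / r ^ n := by
  have hnorm : Set.EqOn (fun z ↦ ‖((z - c) ^ n)⁻¹ * (2 * (f z).re : ℝ)‖)
      (fun z ↦ (2 / r ^ n) • (f z).re) (sphere c |r|) := fun z hz ↦ by
    rw [abs_of_pos hr] at hz
    have hpos : 0 ≤ 2 * (f z).re := mul_nonneg two_pos.le (hre z hz)
    simp only [norm_mul, norm_inv, norm_pow, mem_sphere_iff_norm.1 hz, norm_real,
      Real.norm_of_nonneg hpos, smul_eq_mul]
    ring
  calc ‖iteratedDeriv n f c / (n !)‖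
      = ‖circleAverage (fun z ↦ ((z - c) ^ n)⁻¹ * (2 * (f z).re : ℝ)) c r‖ := by
        rw [circleAverage_inv_pow_mul_two_re hr hf hn]
    _ ≤ circleAverage (fun z ↦ ‖((z - c) ^ n)⁻¹ * (2 * (f z).re : ℝ)‖) c r :=
        norm_circleAverage_le_circleAverage_norm ..
    _ = (2 / r ^ n) • (f c).re := by
        rw [Real.circleAverage_congr_sphere hnorm, Real.circleAverage_fun_smul,
          circleAverage_re hr hf]
    _ = 2 * (f c).re / r ^ n := by rw [smul_eq_mul]; ring

theorem norm_iteratedDeriv_div_factorial_le_of_re_nonneg (hr : 0 < r)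
    (hf : DifferentiableOn ℂ f (ball c r)) (hre : ∀ z ∈ ball c r, z ≠ c → 0 ≤ (f z).re)
    (hn : n ≠ 0) : ‖iteratedDeriv n f c / (n !)‖ ≤ 2 * (f c).re / r ^ n := by
  have hlt : ∀ s ∈ Set.Ioo 0 r, ‖iteratedDeriv n f c / (n !)‖ ≤ 2 * (f c).re / s ^ n := by
    rintro s ⟨hs, hsr⟩
    refine norm_iteratedDeriv_div_factorial_le_of_re_nonneg_sphere hs
      (hf.diffContOnCl_ball (closedBall_subset_ball hsr)) (fun z hz ↦ ?_) hn
    exact hre z (sphere_subset_ball hsr hz) (ne_of_mem_sphere hz hs.ne')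
  have hcont : ContinuousAt (fun s : ℝ ↦ 2 * (f c).re / s ^ n) r := by
    fun_prop (disch := positivity)
  exact ge_of_tendsto (hcont.mono_left nhdsWithin_le_nhds)
    (Filter.eventually_of_mem (Ioo_mem_nhdsLT hr) hlt)

end CircleAverage

section Generator

variable {X : Type*} [SeminormedAddCommGroup X] [NormedSpace ℂ X]

/-- The one-sided estimate satisfied by the holomorphic infinitesimal generators on the open unit
ball of `X`. It is tested on the functionals `zs` supporting at `z`, scaled so that
`⟨z, zs⟩ = ‖z‖ ^ 2 = ‖zs‖ ^ 2`. -/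
def IsBallGenerator (G : X → X) : Prop :=
  ∀ z ∈ ball (0 : X) 1, ∀ zs : X →L[ℂ] ℂ, zs z = (‖z‖ ^ 2 : ℂ) → ‖zs‖ = ‖z‖ →
    (zs (G z)).re ≤ (zs (G 0)).re * (1 - ‖z‖ ^ 2)

/-- The function `p` in the Berkson-Porta decomposition `g ζ = g 0 - conj (g 0) * ζ ^ 2 - ζ * p ζ`
of a map `g` of the unit disc, with the value at `0` filled in by `dslope`. -/
noncomputable def berksonPorta (g : ℂ → ℂ) (ζ : ℂ) : ℂ :=
  -(dslope g 0 ζ + conj (g 0) * ζ)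

lemma eq_sub_mul_berksonPorta (g : ℂ → ℂ) (ζ : ℂ) :
    g ζ = g 0 - conj (g 0) * ζ ^ 2 - ζ * berksonPorta g ζ := by
  have h := sub_smul_dslope g 0 ζ
  rw [sub_zero, smul_eq_mul] at h
  rw [berksonPorta]
  linear_combination -h

lemma berksonPorta_zero (g : ℂ → ℂ) : berksonPorta g 0 = -deriv g 0 := by
  simp [berksonPorta]

lemma differentiableOn_berksonPorta {g : ℂ → ℂ} {s : Set ℂ} (hs : s ∈ 𝓝 0)
    (hg : DifferentiableOn ℂ g s) : DifferentiableOn ℂ (berksonPorta g) s :=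
  (((differentiableOn_dslope hs).2 hg).add
    (by fun_prop : Differentiable ℂ fun ζ ↦ conj (g 0) * ζ).differentiableOn).neg

lemma iteratedDeriv_berksonPorta_div_factorial {g : ℂ → ℂ} (hg : AnalyticAt ℂ g 0) (n : ℕ) :
    iteratedDeriv n (berksonPorta g) 0 / n !
      = -(iteratedDeriv (n + 1) g 0 / (n + 1)! + if n = 1 then conj (g 0) else 0) := by
  have hslope : ContDiffAt ℂ n (dslope g 0) 0 :=
    have ⟨_, hp⟩ := hg
    hp.has_fpower_series_dslope_fslope.analyticAt.contDiffAt
  have hadd : iteratedDeriv n (berksonPorta g) 0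
      = -(iteratedDeriv n (dslope g 0) 0 + conj (g 0) * if n = 1 then 1 else 0) := by
    unfold berksonPorta
    rw [iteratedDeriv_fun_neg, iteratedDeriv_fun_add hslope (by fun_prop),
      iteratedDeriv_const_mul_field, iteratedDeriv_fun_id_zero]
  rw [hadd, ← iteratedDeriv_dslope_div_factorial hg]
  split_ifs with h
  · simp [h]
  · ring

namespace IsBallGenerator

lemma comp_supporting_functional {G : X → X} (hG : IsBallGenerator G) {v : X} (hv : ‖v‖ = 1)
    {vs : X →L[ℂ] ℂ} (hvs : vs v = 1) (hvs_norm : ‖vs‖ = 1) :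
    IsBallGenerator fun ζ : ℂ ↦ vs (G (ζ • v)) := by
  intro ζ hζ zs hzs hzs_norm
  have hnorm_smul : ‖ζ • v‖ = ‖ζ‖ := by rw [norm_smul, hv, mul_one]
  have hcomp (w : ℂ) : zs.comp vs (w • v) = zs w := by
    rw [zs.comp_apply, map_smul, hvs, smul_eq_mul, mul_one]
  have hcomp_norm : ‖zs.comp vs‖ = ‖ζ‖ := by
    refine le_antisymm ?_ ?_
    · simpa [hzs_norm, hvs_norm] using zs.opNorm_comp_le vs
    · rw [← hzs_norm]
      refine zs.opNorm_le_bound (norm_nonneg _) fun w ↦ ?_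
      simpa only [hcomp, norm_smul, hv, mul_one] using (zs.comp vs).le_opNorm (w • v)
  simpa [hnorm_smul] using hG (ζ • v) (by simpa [hnorm_smul] using hζ) (zs.comp vs)
    (by rw [hcomp, hzs, hnorm_smul]) (by rw [hcomp_norm, hnorm_smul])

variable {g : ℂ → ℂ}

lemma re_conj_mul_le (hg : IsBallGenerator g) {ζ : ℂ} (hζ : ζ ∈ ball (0 : ℂ) 1) :
    (conj ζ * g ζ).re ≤ (conj ζ * g 0).re * (1 - ‖ζ‖ ^ 2) := by
  simpa using hg ζ hζ (.mul ℂ ℂ (conj ζ)) (by simp [conj_mul']) (by simp)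

lemma re_berksonPorta_nonneg (hg : IsBallGenerator g) {ζ : ℂ} (hζ : ζ ∈ ball (0 : ℂ) 1)
    (hζ0 : ζ ≠ 0) : 0 ≤ (berksonPorta g ζ).re := by
  have hdecomp : conj ζ * g ζ = conj ζ * g 0 - (‖ζ‖ ^ 2 : ℝ) * (conj (g 0) * ζ)
      - (‖ζ‖ ^ 2 : ℝ) * berksonPorta g ζ := by
    push_cast
    rw [← conj_mul']
    linear_combination conj ζ * eq_sub_mul_berksonPorta g ζ
  have hre_symm : (conj (g 0) * ζ).re = (conj ζ * g 0).re := by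
    rw [← conj_re, map_mul, conj_conj, mul_comm]
  have hle := hg.re_conj_mul_le hζ
  rw [hdecomp, sub_re, sub_re, re_ofReal_mul, re_ofReal_mul, hre_symm] at hle
  exact nonneg_of_mul_nonneg_right (a := ‖ζ‖ ^ 2) (by linarith) (by positivity)

theorem norm_iteratedDeriv_div_factorial_add_le (hg : IsBallGenerator g)
    (hd : DifferentiableOn ℂ g (ball 0 1)) {n : ℕ} (hn : n ≠ 0) :
    ‖iteratedDeriv (n + 1) g 0 / (n + 1)! + if n = 1 then conj (g 0) else 0‖
      ≤ -(2 * (deriv g 0).re) := by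
  have hnhds : ball (0 : ℂ) 1 ∈ 𝓝 0 := ball_mem_nhds 0 one_pos
  have h := norm_iteratedDeriv_div_factorial_le_of_re_nonneg one_pos
    (differentiableOn_berksonPorta hnhds hd) (fun ζ ↦ hg.re_berksonPorta_nonneg) hn
  rw [iteratedDeriv_berksonPorta_div_factorial (hd.analyticAt hnhds), norm_neg,
    berksonPorta_zero, neg_re, one_pow, div_one, mul_neg] at h
  exact h

end IsBallGenerator

lemma hasFPowerSeriesOnBall_comp_smul {G : X → X} {Q : ℕ → X → X}
    (hQhom : ∀ j, ∀ (c : ℂ) (v : X), Q j (c • v) = c ^ j • Q j v)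
    (hsum : ∀ z ∈ ball (0 : X) 1, HasSum (fun j ↦ Q j z) (G z)) {v : X} (hv : ‖v‖ ≤ 1)
    (vs : X →L[ℂ] ℂ) :
    HasFPowerSeriesOnBall (fun ζ : ℂ ↦ vs (G (ζ • v))) (.ofScalars ℂ fun j ↦ vs (Q j v)) 0 1 := by
  refine hasFPowerSeriesOnBall_ofScalars_of_hasSum one_pos fun ζ hζ ↦ ?_
  rw [← ENNReal.ofReal_one, eball_ofReal, mem_ball_zero_iff] at hζ
  have hmem : ζ • v ∈ ball (0 : X) 1 := by
    rw [mem_ball_zero_iff, norm_smul]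
    exact (mul_le_of_le_one_right (norm_nonneg ζ) hv).trans_lt hζ
  simpa [hQhom, mul_comm] using vs.hasSum (hsum _ hmem)

end Generator

theorem stmt6_general {X : Type*} [SeminormedAddCommGroup X] [NormedSpace ℂ X] {G : X → X}
    (hG : IsBallGenerator G) {Q : ℕ → X → X}
    (hQhom : ∀ j, ∀ (c : ℂ) (v : X), Q j (c • v) = c ^ j • Q j v)
    (hsum : ∀ z ∈ ball (0 : X) 1, HasSum (fun j ↦ Q j z) (G z)) {v : X} (hv : ‖v‖ = 1)
    {vs : X →L[ℂ] ℂ} (hvs : vs v = 1) (hvs_norm : ‖vs‖ = 1) :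
    ‖vs (Q 2 v)‖ ≤ ‖G 0‖ - 2 * (vs (Q 1 v)).re ∧
      ∀ j, 3 ≤ j → ‖vs (Q j v)‖ ≤ -(2 * (vs (Q 1 v)).re) := by
  have hseries := hasFPowerSeriesOnBall_comp_smul hQhom hsum hv.le vs
  have hcoeff (j : ℕ) : iteratedDeriv j (fun ζ : ℂ ↦ vs (G (ζ • v))) 0 / j ! = vs (Q j v) := by
    rw [iteratedDeriv_div_factorial_eq_coeff hseries.hasFPowerSeriesAt,
      FormalMultilinearSeries.coeff_ofScalars]
  have hderiv : deriv (fun ζ : ℂ ↦ vs (G (ζ • v))) 0 = vs (Q 1 v) := by simpa using hcoeff 1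
  have hbound {n : ℕ} (hn : n ≠ 0) :
      ‖vs (Q (n + 1) v) + if n = 1 then conj (vs (G 0)) else 0‖ ≤ -(2 * (vs (Q 1 v)).re) := by
    have hdiff : DifferentiableOn ℂ (fun ζ : ℂ ↦ vs (G (ζ • v))) (ball 0 1) := by
      simpa [← eball_ofReal] using hseries.differentiableOn
    have hdisc := hG.comp_supporting_functional hv hvs hvs_norm
    simpa only [hcoeff, hderiv, zero_smul] using
      hdisc.norm_iteratedDeriv_div_factorial_add_le hdiff hn
  refine ⟨?_, fun j hj ↦ ?_⟩
  · have hG0 : ‖conj (vs (G 0))‖ ≤ ‖G 0‖ := by simpa [hvs_norm] using vs.le_opNorm (G 0)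
    have htwo := hbound one_ne_zero
    rw [if_pos rfl] at htwo
    linarith [norm_le_add_norm_add (vs (Q 2 v)) (conj (vs (G 0)))]
  · obtain ⟨n, rfl⟩ := Nat.exists_eq_add_of_le' (by omega : 1 ≤ j)
    simpa [show n ≠ 1 by omega] using hbound (n := n) (by omega)

theorem stmt6 {X : Type*} [NormedAddCommGroup X] [NormedSpace ℂ X] [CompleteSpace X]
    (G : X → X) (hG : DifferentiableOn ℂ G (ball 0 1))
    (hgen : ∀ z ∈ ball (0:X) 1, ∀ zs : X →L[ℂ] ℂ,
      zs z = (‖z‖ ^ 2 : ℂ) → ‖zs‖ = ‖z‖ →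
      (zs (G z)).re ≤ (zs (G 0)).re * (1 - ‖z‖ ^ 2))
    (Q : ℕ → X → X)
    (hQcont : ∀ j, Continuous (Q j))
    (hQhom : ∀ j, ∀ (c : ℂ) (v : X), Q j (c • v) = c ^ j • Q j v)
    (hQ0 : ∀ z, Q 0 z = G 0)
    (hQ1 : ∀ z, Q 1 z = fderiv ℂ G 0 z)
    (hsum : ∀ z ∈ ball (0:X) 1, HasSum (fun j => Q j z) (G z)) :
    ∀ v : X, ‖v‖ = 1 → ∀ vs : X →L[ℂ] ℂ, vs v = 1 → ‖vs‖ = 1 →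
      ‖vs (Q 2 v)‖ ≤ ‖G 0‖ - 2 * (vs (fderiv ℂ G 0 v)).re ∧
      ∀ j, 3 ≤ j → ‖vs (Q j v)‖ ≤ -(2 * (vs (fderiv ℂ G 0 v)).re) := by
  intro v hv vs hvs hvs_norm
  simpa only [hQ1] using stmt6_general hgen hQhom hsum hv hvs hvs_norm
end

section
/- Let X be a complex Banach space with open unit ball B and let G : B → X be an infinitesimal generator with T := DG(0). Then for every z ∈ B: ‖G(z) − G(0)‖ ≤ 4‖z‖²·‖G(0)‖ + e·‖z‖·V(T) − 8·m(T)·‖z‖²·(1 − ‖z‖·ln 2)/(1 − ‖z‖)², where m(T) = inf{Re⟨Tv, v*⟩ : ‖v‖ = 1} and V(T) = sup{|⟨Tv, v*⟩| : ‖v‖ = 1}. In particular G is bounded on every ball of radius r < 1. -/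
/-!
Expand `G = ∑ Pₖ` in homogeneous polynomials at `0`. Along the complex line through a unit vector
`v` supported by `v⋆`, the generator inequality says that
`ζ ↦ -((v⋆ (G (ζ v)) - v⋆ (G 0)) / ζ + conj (v⋆ (G 0)) ζ)` has nonnegative real part, so the
Carathéodory inequalities bound its coefficients, and with them the numerical radius of `Pₖ`,
`k ≥ 2`, by `-2 m(T)`, plus `‖G 0‖` when `k = 2`.

Harris's inequality turns this into a bound on `‖Pₖ‖`. The Euler iterates of `w' = P w` are
holomorphic in the complex step `h`, grow no faster than the solution of `a' = V(P) a ^ k`, and have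
derivative `N P x` at `h = 0` after `N` steps; the Cauchy estimate for this derivative gives the
constant `k ^ (k / (k - 1))`, or `e` when `k = 1`. For `k ≥ 2` this constant lies below its tangent
line `4 (1 + (1 - log 2) (k - 2))` at `k = 2`, which makes the resulting series summable in closed
form.
-/

open Complex Metric

open scoped ComplexConjugate NNReal Topology

section TaylorCoefficients

open scoped Nat

variable {F F' : Type*} [NormedAddCommGroup F] [NormedSpace ℂ F] [NormedAddCommGroup F']
  [NormedSpace ℂ F']

/-- The `n`-th Taylor coefficient at `0` of a function of one complex variable, with the junk value
of `iteratedDeriv` if the function is not smooth there. -/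
noncomputable def taylorCoeff (f : ℂ → F) (n : ℕ) : F :=
  (n ! : ℂ)⁻¹ • iteratedDeriv n f 0

@[simp] lemma taylorCoeff_zero (f : ℂ → F) : taylorCoeff f 0 = f 0 := by
  simp [taylorCoeff]

@[simp] lemma taylorCoeff_one (f : ℂ → F) : taylorCoeff f 1 = deriv f 0 := by
  simp [taylorCoeff]

lemma taylorCoeff_comp_mul_left (f : ℂ → F) (c : ℂ) (n : ℕ) :
    taylorCoeff (fun ζ => f (c * ζ)) n = c ^ n • taylorCoeff f n := by
  have iterate : iteratedDeriv n (fun ζ => f (c * ζ)) =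
      fun ζ => c ^ n • iteratedDeriv n f (c * ζ) := by
    induction n with
    | zero => simp
    | succ n ih =>
      ext ζ
      rw [iteratedDeriv_succ, ih, deriv_fun_const_smul_field,
        deriv_comp_mul_left c (iteratedDeriv n f), iteratedDeriv_succ, smul_smul, pow_succ]
  simp only [taylorCoeff, iterate, mul_zero, smul_comm (n ! : ℂ)⁻¹]

lemma coeff_eq_taylorCoeff [CompleteSpace F] {f : ℂ → F} {p : FormalMultilinearSeries ℂ ℂ F}
    (h : HasFPowerSeriesAt f p 0) (n : ℕ) : p.coeff n = taylorCoeff f n := by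
  obtain ⟨r, hr⟩ := h
  have := hr.factorial_smul 1 n
  rw [← iteratedDeriv_eq_iteratedFDeriv, ← Nat.cast_smul_eq_nsmul ℂ] at this
  rw [taylorCoeff, ← this, inv_smul_smul₀ (mod_cast n.factorial_ne_zero)]
  rfl

lemma taylorCoeff_continuousLinearMap_comp [CompleteSpace F] [CompleteSpace F'] (T : F →L[ℂ] F')
    {f : ℂ → F} (hf : AnalyticAt ℂ f 0) (n : ℕ) :
    taylorCoeff (fun ζ => T (f ζ)) n = T (taylorCoeff f n) := by
  obtain ⟨p, r, hp⟩ := hf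
  have hTp : HasFPowerSeriesAt (fun ζ => T (f ζ)) (T.compFormalMultilinearSeries p) 0 :=
    ⟨r, T.comp_hasFPowerSeriesOnBall hp⟩
  rw [← coeff_eq_taylorCoeff hTp, ← coeff_eq_taylorCoeff ⟨r, hp⟩]
  rfl

lemma taylorCoeff_dslope [CompleteSpace F] {f : ℂ → F} (hf : AnalyticAt ℂ f 0) (n : ℕ) :
    taylorCoeff (dslope f 0) n = taylorCoeff f (n + 1) := by
  obtain ⟨p, hp⟩ := hf
  rw [← coeff_eq_taylorCoeff hp.has_fpower_series_dslope_fslope, ← coeff_eq_taylorCoeff hp,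
    FormalMultilinearSeries.coeff_fslope]

lemma taylorCoeff_fun_neg (f : ℂ → F) (n : ℕ) :
    taylorCoeff (fun ζ => -f ζ) n = -taylorCoeff f n := by
  simp [taylorCoeff]

lemma taylorCoeff_dslope_add_mul {f : ℂ → ℂ} (hf : AnalyticAt ℂ f 0) (c : ℂ) (n : ℕ) :
    taylorCoeff (fun ζ => dslope f 0 ζ + c * ζ) (n + 1) =
      taylorCoeff f (n + 2) + if n = 0 then c else 0 := by
  have hdslope : AnalyticAt ℂ (dslope f 0) 0 := by
    obtain ⟨p, hp⟩ := hf
    exact hp.has_fpower_series_dslope_fslope.analyticAt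
  rw [← taylorCoeff_dslope hf, taylorCoeff, taylorCoeff,
    iteratedDeriv_fun_add hdslope.contDiffAt (by fun_prop), iteratedDeriv_const_mul_field,
    iteratedDeriv_fun_id_zero, smul_add]
  rcases eq_or_ne n 0 with rfl | hn
  · simp
  · simp [hn]

lemma norm_taylorCoeff_le [CompleteSpace F] {f : ℂ → F} {r M : ℝ} (hr : 0 < r)
    (hf : DiffContOnCl ℂ f (ball 0 r)) (hM : ∀ ζ ∈ sphere (0 : ℂ) r, ‖f ζ‖ ≤ M) (n : ℕ) :
    ‖taylorCoeff f n‖ ≤ M / r ^ n := by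
  have h := norm_iteratedDeriv_le_of_forall_mem_sphere_norm_le n hr hf hM
  rw [taylorCoeff, norm_smul, norm_inv, norm_natCast, inv_mul_le_iff₀ (by positivity)]
  rwa [mul_div_assoc] at h

lemma hasSum_taylorCoeff [CompleteSpace F] {f : ℂ → F} {r : ℝ}
    (hf : DifferentiableOn ℂ f (ball 0 r)) {ζ : ℂ}
    (hζ : ζ ∈ ball 0 r) : HasSum (fun n => ζ ^ n • taylorCoeff f n) (f ζ) := by
  simpa only [taylorCoeff, sub_zero, smul_comm (ζ ^ _)] using hasSum_taylorSeries_on_ball hf hζ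

end TaylorCoefficients

section Caratheodory

open Real (circleAverage)

lemma norm_circleAverage_le_of_norm_le {E : Type*} [NormedAddCommGroup E] [NormedSpace ℝ E]
    {f : ℂ → E} {g : ℂ → ℝ} {c : ℂ} {r : ℝ} (hg : CircleIntegrable g c r)
    (h : ∀ ζ ∈ sphere c |r|, ‖f ζ‖ ≤ g ζ) : ‖circleAverage f c r‖ ≤ circleAverage g c r := by
  rw [circleAverage, circleAverage, norm_smul, norm_inv, Real.norm_of_nonneg (by positivity),
    smul_eq_mul]
  gcongr
  refine intervalIntegral.norm_integral_le_of_norm_le (by positivity) ?_ hg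
  exact .of_forall fun θ _ => h _ (circleMap_mem_sphere' c r θ)

variable {p : ℂ → ℂ} {r : ℝ} {n : ℕ}

lemma circleAverage_inv_pow_mul_s9 (hr : 0 < r) (hp : DiffContOnCl ℂ p (ball 0 r)) (n : ℕ) :
    circleAverage (fun ζ => (ζ ^ n)⁻¹ * p ζ) 0 r = taylorCoeff p n := by
  have h := hp.circleIntegral_one_div_sub_center_pow_smul hr n
  rw [Real.circleAverage_eq_circleIntegral hr.ne', taylorCoeff, inv_smul_eq_iff₀ two_pi_I_ne_zero]
  simp only [sub_zero, one_div, smul_eq_mul, pow_succ', mul_inv, mul_assoc] at h ⊢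
  rw [h]
  ring

lemma circleAverage_inv_pow_mul_conj (hr : 0 < r) (hp : DiffContOnCl ℂ p (ball 0 r))
    (hn : n ≠ 0) : circleAverage (fun ζ => (ζ ^ n)⁻¹ * conj (p ζ)) 0 r = 0 := by
  have hd : DiffContOnCl ℂ (fun ζ => ζ ^ n * p ζ) (ball 0 r) :=
    (differentiable_pow n).diffContOnCl.smul hp
  have hint : CircleIntegrable (fun ζ => ζ ^ n * p ζ) 0 r :=
    (hd.continuousOn_ball.mono sphere_subset_closedBall).circleIntegrable hr.le
  have heq : Set.EqOn (fun ζ => (ζ ^ n)⁻¹ * conj (p ζ))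
      (fun ζ => ((r ^ n) ^ 2)⁻¹ • conjCLE (ζ ^ n * p ζ)) (sphere 0 |r|) := fun ζ hζ => by
    have hζr : ‖ζ‖ = r := by simpa [abs_of_pos hr] using hζ
    have hζ0 : ζ ≠ 0 := norm_pos_iff.mp (hζr ▸ hr)
    have hr2 : ((r ^ n) ^ 2 : ℂ) = ζ ^ n * conj ζ ^ n := by
      rw [← mul_pow, mul_conj', hζr, pow_right_comm]
    have hconj : conj ζ ^ n ≠ 0 := pow_ne_zero n (by simpa using hζ0)
    simp only [conjCLE_apply, map_mul, map_pow, real_smul, ofReal_inv, ofReal_pow, hr2]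
    field_simp
  have hmean : circleAverage (fun ζ => ζ ^ n * p ζ) 0 r = 0 := by
    rw [DiffContOnCl.circleAverage (by rwa [abs_of_pos hr])]
    simp [hn]
  rw [Real.circleAverage_congr_sphere heq, Real.circleAverage_fun_smul]
  have := conjCLE.toContinuousLinearMap.circleAverage_comp_comm hint
  rw [hmean, map_zero] at this
  exact (congrArg _ this).trans (smul_zero _)

lemma circleAverage_inv_pow_mul_two_mul_re (hr : 0 < r) (hp : DiffContOnCl ℂ p (ball 0 r))
    (hn : n ≠ 0) :
    circleAverage (fun ζ => (ζ ^ n)⁻¹ * ((2 * (p ζ).re : ℝ) : ℂ)) 0 r = taylorCoeff p n := by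
  have hcont : ContinuousOn p (sphere 0 r) := hp.continuousOn_ball.mono sphere_subset_closedBall
  have hpow : ContinuousOn (fun ζ : ℂ => (ζ ^ n)⁻¹) (sphere 0 r) :=
    (continuous_pow n).continuousOn.inv₀ fun ζ hζ => pow_ne_zero n (ne_of_mem_sphere hζ hr.ne')
  have hp_int : CircleIntegrable (fun ζ => (ζ ^ n)⁻¹ * p ζ) 0 r :=
    (hpow.mul hcont).circleIntegrable hr.le
  have hconj_int : CircleIntegrable (fun ζ => (ζ ^ n)⁻¹ * conj (p ζ)) 0 r :=
    (hpow.mul (continuous_conj.comp_continuousOn hcont)).circleIntegrable hr.le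
  simp only [← add_conj, mul_add]
  rw [Real.circleAverage_fun_add hp_int hconj_int, circleAverage_inv_pow_mul_s9 hr hp,
    circleAverage_inv_pow_mul_conj hr hp hn, add_zero]

lemma norm_taylorCoeff_mul_pow_le_two_mul_re (hr : 0 < r) (hp : DiffContOnCl ℂ p (ball 0 r))
    (hre : ∀ ζ ∈ sphere 0 r, 0 ≤ (p ζ).re) (hn : n ≠ 0) :
    ‖taylorCoeff p n‖ * r ^ n ≤ 2 * (p 0).re := by
  have hcont : ContinuousOn p (sphere 0 r) := hp.continuousOn_ball.mono sphere_subset_closedBall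
  have hint : CircleIntegrable (fun ζ => (2 / r ^ n) • (p ζ).re) 0 r :=
    ((continuous_re.comp_continuousOn hcont).const_smul (2 / r ^ n)).circleIntegrable hr.le
  have hmean : circleAverage (fun ζ => (p ζ).re) 0 r = (p 0).re := by
    rw [← DiffContOnCl.circleAverage (f := p) (c := 0) (by rwa [abs_of_pos hr])]
    exact reCLM.circleAverage_comp_comm (hcont.circleIntegrable hr.le)
  have hbound : ∀ ζ ∈ sphere (0 : ℂ) |r|,
      ‖(ζ ^ n)⁻¹ * ((2 * (p ζ).re : ℝ) : ℂ)‖ ≤ (2 / r ^ n) • (p ζ).re := fun ζ hζ => by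
    rw [abs_of_pos hr] at hζ
    have hpos := hre ζ hζ
    rw [norm_mul, norm_inv, norm_pow, mem_sphere_zero_iff_norm.mp hζ, norm_real,
      Real.norm_of_nonneg (by positivity), smul_eq_mul, ← div_eq_inv_mul, mul_div_right_comm]
  have h := norm_circleAverage_le_of_norm_le hint hbound
  rwa [circleAverage_inv_pow_mul_two_mul_re hr hp hn, Real.circleAverage_fun_smul, hmean,
    smul_eq_mul, div_mul_eq_mul_div, le_div_iff₀ (by positivity)] at h

lemma norm_taylorCoeff_le_two_mul_re (hp : DifferentiableOn ℂ p (ball 0 1))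
    (hre : ∀ ζ ∈ ball (0 : ℂ) 1, ζ ≠ 0 → 0 ≤ (p ζ).re) (hn : n ≠ 0) :
    ‖taylorCoeff p n‖ ≤ 2 * (p 0).re := by
  have hlim : Filter.Tendsto (fun r : ℝ => ‖taylorCoeff p n‖ * r ^ n) (𝓝[<] 1)
      (𝓝 ‖taylorCoeff p n‖) :=
    Filter.Tendsto.mono_left (Continuous.tendsto' (by fun_prop) _ _ (by simp)) nhdsWithin_le_nhds
  refine le_of_tendsto hlim ?_
  filter_upwards [Ioo_mem_nhdsLT one_pos] with r hr
  refine norm_taylorCoeff_mul_pow_le_two_mul_re hr.1 ?_ (fun ζ hζ => ?_) hn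
  · exact (hp.mono (closure_ball_subset_closedBall.trans
      (closedBall_subset_ball hr.2))).diffContOnCl
  · exact hre ζ (sphere_subset_ball hr.2 hζ) (ne_of_mem_sphere hζ hr.1.ne')

end Caratheodory

section HolomorphicLimits

variable {E F : Type*} [NormedAddCommGroup E] [NormedSpace ℂ E] [NormedAddCommGroup F]
  [NormedSpace ℂ F]

lemma norm_fderiv_le_of_norm_le {f : E → F} {c : E} {r M : ℝ} (hr : 0 < r)
    (hf : DifferentiableOn ℂ f (ball c r)) (hM : ∀ z ∈ ball c r, ‖f z‖ ≤ M) :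
    ‖fderiv ℂ f c‖ ≤ 2 * M / r := by
  refine norm_fderiv_le_div_of_mapsTo_ball hf (fun z hz => ?_) hr
  rw [mem_closedBall_iff_norm]
  linarith [norm_sub_le (f z) (f c), hM z hz, hM c (mem_ball_self hr)]

variable {ι : Type*} {l : Filter ι} {f : ι → E → F} {g : E → F}

lemma uniformCauchySeqOn_fderiv_ball {c : E} {r : ℝ} (hr : 0 < r)
    (hf : ∀ᶠ i in l, DifferentiableOn ℂ (f i) (ball c (r + r)))
    (hfg : UniformCauchySeqOn f l (ball c (r + r))) :
    UniformCauchySeqOn (fun i => fderiv ℂ (f i)) l (ball c r) := by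
  intro u hu
  obtain ⟨ε, hε, hεu⟩ := mem_uniformity_dist.mp hu
  have hclose := hfg _ (dist_mem_uniformity (show 0 < r * ε / 4 by positivity))
  filter_upwards [hclose, hf.prod_mk hf] with m hm hdiff x hx
  have hball : ball x r ⊆ ball c (r + r) :=
    ball_subset_ball' (by linarith [mem_ball.mp hx])
  have hc : x ∈ ball c (r + r) := hball (mem_ball_self hr)
  have hat : ∀ {h : E → F}, DifferentiableOn ℂ h (ball c (r + r)) → DifferentiableAt ℂ h x :=
    fun h => h.differentiableAt (isOpen_ball.mem_nhds hc)
  have hbound : ‖fderiv ℂ (f m.1 - f m.2) x‖ ≤ 2 * (r * ε / 4) / r :=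
    norm_fderiv_le_of_norm_le hr ((hdiff.1.sub hdiff.2).mono hball) fun z hz => by
      simpa [dist_eq_norm] using (hm z (hball hz)).le
  refine hεu ?_
  rw [dist_eq_norm, ← fderiv_sub (hat hdiff.1) (hat hdiff.2)]
  refine hbound.trans_lt ?_
  field_simp
  norm_num

lemma differentiableOn_of_tendstoUniformlyOn [CompleteSpace F] [l.NeBot] {U : Set E}
    (hU : IsOpen U) (hf : ∀ᶠ i in l, DifferentiableOn ℂ (f i) U)
    (hfg : TendstoUniformlyOn f g l U) : DifferentiableOn ℂ g U := by
  intro x hx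
  obtain ⟨r, hr, hrU⟩ := isOpen_iff.mp hU x hx
  obtain ⟨s, hs, rfl⟩ : ∃ s > 0, s + s = r := ⟨r / 2, half_pos hr, add_halves r⟩
  have hcauchy : UniformCauchySeqOn (fun i => fderiv ℂ (f i)) l (ball x s) :=
    uniformCauchySeqOn_fderiv_ball hs (hf.mono fun i hi => hi.mono hrU)
      (hfg.uniformCauchySeqOn.mono hrU)
  have hlim : TendstoUniformlyOn (fun i => fderiv ℂ (f i))
      (fun y => l.limUnder fun i => fderiv ℂ (f i) y) l (ball x s) :=
    hcauchy.tendstoUniformlyOn_of_tendsto fun y hy =>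
      tendsto_nhds_limUnder (cauchy_map_iff_exists_tendsto.mp (hcauchy.cauchy_map hy))
  have hfderiv : ∀ᶠ m : ι × E in l ×ˢ 𝓝 x, HasFDerivAt (f m.1) (fderiv ℂ (f m.1) m.2) m.2 := by
    filter_upwards [hf.prod_mk (hU.mem_nhds hx)] with m hm
    exact (hm.1.differentiableAt (hU.mem_nhds hm.2)).hasFDerivAt
  have hderiv := hasFDerivAt_of_tendstoUniformlyOnFilter
    (hlim.tendstoUniformlyOnFilter.mono_right
      (Filter.le_principal_iff.mpr (ball_mem_nhds x hs))) hfderiv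
    (Filter.eventually_of_mem (hU.mem_nhds hx) fun y hy => hfg.tendsto_at hy)
  exact hderiv.differentiableAt.differentiableWithinAt

end HolomorphicLimits

section HomogeneousParts

variable {E F : Type*} [NormedAddCommGroup E] [NormedSpace ℂ E] [NormedAddCommGroup F]
  [NormedSpace ℂ F]

/-- The `n`-th term of the expansion of `G` at `0` in homogeneous polynomials. Mathlib has no
analyticity of holomorphic maps on Banach spaces, so it is read off on complex lines through `0`. -/
noncomputable def homogPart (G : E → F) (n : ℕ) (v : E) : F :=
  taylorCoeff (fun ζ => G (ζ • v)) n

/-- A continuous homogeneous polynomial of degree `m` between complex normed spaces, encoded as an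
entire map that is homogeneous of degree `m`. -/
structure IsHomogPolynomial (m : ℕ) (P : E → F) : Prop where
  differentiable : Differentiable ℂ P
  map_smul : ∀ (c : ℂ) (x : E), P (c • x) = c ^ m • P x

lemma isHomogPolynomial_one (T : E →L[ℂ] F) : IsHomogPolynomial 1 T :=
  ⟨T.differentiable, fun c x => by rw [map_smul, pow_one]⟩

variable {G : E → F} {r M : ℝ} {n : ℕ}

@[simp] lemma homogPart_zero (G : E → F) (v : E) : homogPart G 0 v = G 0 := by
  simp [homogPart]

lemma homogPart_one (hG : DifferentiableAt ℂ G 0) (v : E) :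
    homogPart G 1 v = fderiv ℂ G 0 v := by
  have hline : HasDerivAt (fun ζ : ℂ => ζ • v) v 0 := by
    simpa using (hasDerivAt_id (0 : ℂ)).smul_const v
  have hfderiv : HasFDerivAt G (fderiv ℂ G 0) ((0 : ℂ) • v) := by simpa using hG.hasFDerivAt
  rw [homogPart, taylorCoeff_one]
  exact (hfderiv.comp_hasDerivAt 0 hline).deriv

lemma homogPart_smul (G : E → F) (n : ℕ) (c : ℂ) (v : E) :
    homogPart G n (c • v) = c ^ n • homogPart G n v := by
  simpa only [homogPart, smul_smul, mul_comm c] using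
    taylorCoeff_comp_mul_left (fun ζ => G (ζ • v)) c n

lemma differentiableOn_comp_smul (hG : DifferentiableOn ℂ G (ball 0 r)) {R : ℝ} {v : E}
    (hR : R * ‖v‖ < r) : DifferentiableOn ℂ (fun ζ : ℂ => G (ζ • v)) (closedBall 0 R) := by
  refine hG.comp (by fun_prop) fun ζ hζ => ?_
  rw [mem_closedBall_zero_iff] at hζ
  rw [mem_ball_zero_iff, norm_smul]
  exact (mul_le_mul_of_nonneg_right hζ (norm_nonneg v)).trans_lt hR

variable [CompleteSpace F]

lemma hasSum_homogPart (hG : DifferentiableOn ℂ G (ball 0 r)) {z : E} (hz : z ∈ ball 0 r) :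
    HasSum (fun n => homogPart G n z) (G z) := by
  rw [mem_ball_zero_iff] at hz
  obtain ⟨R, hRr, hR⟩ : ∃ R : ℝ, R * ‖z‖ < r ∧ 1 < R := by
    have hev : ∀ᶠ R : ℝ in 𝓝 1, R * ‖z‖ < r :=
      (continuous_mul_const ‖z‖).continuousAt.eventually_lt_const (by simpa using hz)
    have hgt : ∀ᶠ R : ℝ in 𝓝[>] 1, 1 < R := self_mem_nhdsWithin
    exact ((hev.filter_mono nhdsWithin_le_nhds).and hgt).exists
  have h := hasSum_taylorCoeff ((differentiableOn_comp_smul hG hRr).mono ball_subset_closedBall)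
    (ζ := 1) (by simpa using hR)
  simpa only [homogPart, one_pow, one_smul] using h

lemma norm_homogPart_le (hG : DifferentiableOn ℂ G (ball 0 r)) (hM : ∀ z ∈ ball 0 r, ‖G z‖ ≤ M)
    {z : E} (hz : z ∈ ball 0 r) (n : ℕ) : ‖homogPart G n z‖ ≤ M := by
  have hline : DiffContOnCl ℂ (fun ζ : ℂ => G (ζ • z)) (ball 0 1) :=
    ((differentiableOn_comp_smul hG (by simpa using hz)).mono
      closure_ball_subset_closedBall).diffContOnCl
  simpa [homogPart] using norm_taylorCoeff_le one_pos hline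
    (fun ζ hζ => hM _ (by simpa [norm_smul, mem_sphere_zero_iff_norm.mp hζ] using hz)) n

lemma norm_sum_homogPart_sub_le (hG : DifferentiableOn ℂ G (ball 0 r))
    (hM : ∀ z ∈ ball 0 r, ‖G z‖ ≤ M) {z : E} (hz : z ∈ ball 0 r) {w : ℂ} (hw : ‖w‖ < 1) (n : ℕ) :
    ‖∑ k ∈ Finset.range n, homogPart G k (w • z) - G (w • z)‖ ≤ M * ‖w‖ ^ n / (1 - ‖w‖) := by
  have hwz : w • z ∈ ball 0 r := by
    rw [mem_ball_zero_iff] at hz ⊢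
    rw [norm_smul]
    exact (mul_le_of_le_one_left (norm_nonneg z) hw.le).trans_lt hz
  refine norm_sub_le_of_geometric_bound_of_hasSum hw (fun k => ?_) (hasSum_homogPart hG hwz) n
  rw [homogPart_smul, norm_smul, norm_pow, mul_comm]
  exact mul_le_mul_of_nonneg_right (norm_homogPart_le hG hM hz k) (by positivity)

lemma tendstoUniformlyOn_homogPart (hG : DifferentiableOn ℂ G (ball 0 r))
    (hM : ∀ z ∈ ball 0 r, ‖G z‖ ≤ M) (n : ℕ) :
    TendstoUniformlyOn
      (fun (w : ℂ) z => (w ^ n)⁻¹ • (G (w • z) - ∑ k ∈ Finset.range n, homogPart G k (w • z)))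
      (homogPart G n) (𝓝[≠] 0) (ball 0 r) := by
  have hlim : Filter.Tendsto (fun w : ℂ => M * ‖w‖ / (1 - ‖w‖)) (𝓝[≠] 0) (𝓝 0) := by
    have : ContinuousAt (fun w : ℂ => M * ‖w‖ / (1 - ‖w‖)) 0 :=
      ContinuousAt.div (by fun_prop) (by fun_prop) (by simp)
    simpa using this.tendsto.mono_left nhdsWithin_le_nhds
  rw [tendstoUniformlyOn_iff]
  intro ε hε
  filter_upwards [hlim.eventually_lt_const hε, self_mem_nhdsWithin,
    nhdsWithin_le_nhds (ball_mem_nhds 0 one_pos)] with w hwε hw0 hw1 z hz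
  have hwn : w ^ n ≠ 0 := pow_ne_zero n hw0
  have hrest : homogPart G n z
      - (w ^ n)⁻¹ • (G (w • z) - ∑ k ∈ Finset.range n, homogPart G k (w • z))
      = (w ^ n)⁻¹ • (∑ k ∈ Finset.range (n + 1), homogPart G k (w • z) - G (w • z)) := by
    rw [Finset.sum_range_succ, homogPart_smul G n, ← inv_smul_smul₀ hwn (homogPart G n z),
      ← smul_sub, smul_inv_smul₀ hwn]
    congr 1
    abel
  rw [mem_ball_zero_iff] at hw1
  rw [dist_eq_norm, hrest, norm_smul, norm_inv, norm_pow]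
  refine lt_of_le_of_lt ?_ hwε
  rw [inv_mul_le_iff₀ (by positivity)]
  refine (norm_sum_homogPart_sub_le hG hM hz hw1 (n + 1)).trans_eq ?_
  ring

lemma differentiableOn_homogPart (hG : DifferentiableOn ℂ G (ball 0 r))
    (hM : ∀ z ∈ ball 0 r, ‖G z‖ ≤ M) (n : ℕ) : DifferentiableOn ℂ (homogPart G n) (ball 0 r) := by
  induction n using Nat.strong_induction_on with
  | _ n ih =>
    refine differentiableOn_of_tendstoUniformlyOn isOpen_ball ?_
      (tendstoUniformlyOn_homogPart hG hM n)
    filter_upwards [nhdsWithin_le_nhds (ball_mem_nhds 0 one_pos)] with w hw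
    have hmaps : Set.MapsTo (fun z : E => w • z) (ball 0 r) (ball 0 r) := fun z hz => by
      rw [mem_ball_zero_iff] at hw hz ⊢
      rw [norm_smul]
      exact (mul_le_of_le_one_left (norm_nonneg z) hw.le).trans_lt hz
    have hscale : DifferentiableOn ℂ (fun z : E => w • z) (ball 0 r) := by fun_prop
    exact ((hG.comp hscale hmaps).sub (DifferentiableOn.fun_sum fun k hk =>
      (ih k (Finset.mem_range.mp hk)).comp hscale hmaps)).const_smul _

lemma isHomogPolynomial_homogPart (hr : 0 < r) (hG : DifferentiableOn ℂ G (ball 0 r)) (n : ℕ) :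
    IsHomogPolynomial n (homogPart G n) := by
  refine ⟨?_, homogPart_smul G n⟩
  have hcont : ContinuousAt G 0 := (hG.differentiableAt (ball_mem_nhds 0 hr)).continuousAt
  obtain ⟨δ, hδ, hδM⟩ := eventually_nhds_iff_ball.mp
    ((hcont.norm.eventually_le_const (lt_add_one ‖G 0‖)).and (ball_mem_nhds 0 hr))
  have hd := differentiableOn_homogPart (hG.mono fun z hz => (hδM z hz).2)
    (fun z hz => (hδM z hz).1) n
  intro x
  obtain ⟨c, hc0, hcx⟩ : ∃ c : ℂ, c ≠ 0 ∧ c • x ∈ ball 0 δ := by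
    have hev : ∀ᶠ c : ℂ in 𝓝 0, c • x ∈ ball 0 δ :=
      (continuous_id.smul continuous_const).continuousAt.eventually_mem
        (by simpa using ball_mem_nhds 0 hδ)
    have hne : ∀ᶠ c : ℂ in 𝓝[≠] 0, c ≠ 0 := self_mem_nhdsWithin
    exact (hne.and (hev.filter_mono nhdsWithin_le_nhds)).exists
  have hscaled : homogPart G n = fun y => (c ^ n)⁻¹ • homogPart G n (c • y) := by
    ext y
    rw [homogPart_smul, inv_smul_smul₀ (pow_ne_zero n hc0)]
  rw [hscaled]
  exact ((hd.differentiableAt (isOpen_ball.mem_nhds hcx)).comp x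
    (differentiableAt_id.const_smul c)).const_smul _

end HomogeneousParts

namespace IsHomogPolynomial

variable {E F : Type*} [NormedAddCommGroup E] [NormedSpace ℂ E] [NormedAddCommGroup F]
  [NormedSpace ℂ F] {P : E → F} {m : ℕ}

lemma exists_norm_le (hP : IsHomogPolynomial m P) (R : ℝ) :
    ∃ K, ∀ x ∈ closedBall 0 R, ‖P x‖ ≤ K := by
  have hnear : {x | ‖P x‖ ≤ ‖P 0‖ + 1} ∈ 𝓝 0 :=
    hP.differentiable.continuous.norm.continuousAt.eventually_le_const (lt_add_one _)
  have habsorb := (NormedSpace.isVonNBounded_closedBall ℂ E R hnear).eventually_nhds_zero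
    (mem_of_mem_nhds hnear)
  have hne : ∀ᶠ c : ℂ in 𝓝[≠] 0, c ≠ 0 := self_mem_nhdsWithin
  obtain ⟨c, hc, hcR⟩ := (hne.and (habsorb.filter_mono nhdsWithin_le_nhds)).exists
  refine ⟨‖(c ^ m)⁻¹‖ * (‖P 0‖ + 1), fun x hx => ?_⟩
  rw [← inv_smul_smul₀ (pow_ne_zero m hc) (P x), ← hP.map_smul, norm_smul]
  exact mul_le_mul_of_nonneg_left (hcR hx) (norm_nonneg _)

lemma exists_lipschitzOnWith (hP : IsHomogPolynomial m P) :
    ∃ L, LipschitzOnWith L P (closedBall 0 1) := by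
  obtain ⟨K, hK⟩ := hP.exists_norm_le 2
  refine ⟨(2 * K / 1).toNNReal, (convex_closedBall 0 1).lipschitzOnWith_of_nnnorm_fderiv_le
    (𝕜 := ℂ) (fun x _ => hP.differentiable x) fun x hx => ?_⟩
  have hball : ball x 1 ⊆ closedBall 0 2 := fun y hy => by
    rw [mem_closedBall_zero_iff] at hx ⊢
    linarith [norm_le_norm_add_norm_sub' y x, mem_ball_iff_norm.mp hy]
  exact NNReal.le_toNNReal_of_coe_le (norm_fderiv_le_of_norm_le one_pos
    hP.differentiable.differentiableOn fun y hy => hK y (hball hy))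

lemma norm_le_mul_norm_pow (hP : IsHomogPolynomial m P) {C : ℝ} (hC : ∀ x, ‖x‖ ≤ 1 → ‖P x‖ ≤ C)
    (x : E) : ‖P x‖ ≤ C * ‖x‖ ^ m := by
  obtain ⟨u, hu, hux⟩ : ∃ u : E, ‖u‖ ≤ 1 ∧ (‖x‖ : ℂ) • u = x := by
    rcases eq_or_ne x 0 with rfl | hx
    · exact ⟨0, by simp⟩
    · exact ⟨(‖x‖ : ℂ)⁻¹ • x, (norm_smul_inv_norm hx).le,
        smul_inv_smul₀ (by exact_mod_cast norm_ne_zero_iff.mpr hx) x⟩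
  calc ‖P x‖ = ‖x‖ ^ m * ‖P u‖ := by
        rw [← hux, hP.map_smul, hux, norm_smul, norm_pow, Complex.norm_real, norm_norm]
    _ ≤ ‖x‖ ^ m * C := by gcongr; exact hC u hu
    _ = C * ‖x‖ ^ m := mul_comm _ _

end IsHomogPolynomial

section NumericalRange

variable {X : Type*} [NormedAddCommGroup X] [NormedSpace ℂ X]

/-- The numerical radius `V(P)`: the supremum of `‖v⋆ (P v)‖` over unit vectors `v` and norm-one
functionals `v⋆` supporting the unit ball at `v`; `0` (a junk value) if these are unbounded. -/
noncomputable def numericalRadius (P : X → X) : ℝ :=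
  sSup {x : ℝ | ∃ (v : X) (vs : X →L[ℂ] ℂ), ‖v‖ = 1 ∧ vs v = 1 ∧ ‖vs‖ = 1 ∧ x = ‖vs (P v)‖}

/-- The lower numerical bound `m(P)`: the infimum of `Re v⋆ (P v)` over unit vectors `v` and
norm-one functionals `v⋆` supporting the unit ball at `v`; `0` (a junk value) if these are
unbounded below. -/
noncomputable def lowerNumericalBound (P : X → X) : ℝ :=
  sInf {x : ℝ | ∃ (v : X) (vs : X →L[ℂ] ℂ), ‖v‖ = 1 ∧ vs v = 1 ∧ ‖vs‖ = 1 ∧ x = (vs (P v)).re}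

variable {P : X → X} {K V : ℝ} {L : ℝ≥0} {v : X} {vs : X →L[ℂ] ℂ}

lemma norm_apply_le_of_norm_eq_one (hvs : ‖vs‖ = 1) (x : X) : ‖vs x‖ ≤ ‖x‖ := by
  simpa [hvs] using vs.le_opNorm x

lemma numericalRadius_nonneg (P : X → X) : 0 ≤ numericalRadius P := by
  refine Real.sSup_nonneg ?_
  rintro _ ⟨v, vs, -, -, -, rfl⟩
  exact norm_nonneg _

lemma numericalRadius_le (hV0 : 0 ≤ V)
    (hV : ∀ (v : X) (vs : X →L[ℂ] ℂ), ‖v‖ = 1 → vs v = 1 → ‖vs‖ = 1 → ‖vs (P v)‖ ≤ V) :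
    numericalRadius P ≤ V := by
  refine Real.sSup_le ?_ hV0
  rintro _ ⟨v, vs, hv, hvsv, hvs, rfl⟩
  exact hV v vs hv hvsv hvs

lemma norm_apply_le_numericalRadius (hK : ∀ v, ‖v‖ = 1 → ‖P v‖ ≤ K) (hv : ‖v‖ = 1)
    (hvsv : vs v = 1) (hvs : ‖vs‖ = 1) : ‖vs (P v)‖ ≤ numericalRadius P := by
  refine le_csSup ⟨K, ?_⟩ ⟨v, vs, hv, hvsv, hvs, rfl⟩
  rintro _ ⟨w, ws, hw, -, hws, rfl⟩
  exact (norm_apply_le_of_norm_eq_one hws _).trans (hK w hw)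

lemma lowerNumericalBound_le_re_apply (hK : ∀ v, ‖v‖ = 1 → ‖P v‖ ≤ K) (hv : ‖v‖ = 1)
    (hvsv : vs v = 1) (hvs : ‖vs‖ = 1) : lowerNumericalBound P ≤ (vs (P v)).re := by
  refine csInf_le ⟨-K, ?_⟩ ⟨v, vs, hv, hvsv, hvs, rfl⟩
  rintro _ ⟨w, ws, hw, -, hws, rfl⟩
  refine neg_le_of_abs_le ((Complex.abs_re_le_norm _).trans ?_)
  exact (norm_apply_le_of_norm_eq_one hws _).trans (hK w hw)

lemma norm_sub_inv_norm_smul_le {u y : X} (hu : ‖u‖ ≤ 1) (hy : 1 < ‖y‖) :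
    ‖u - (‖y‖⁻¹ : ℂ) • y‖ ≤ 2 * ‖y - u‖ := by
  have hy0 : (‖y‖ : ℂ) ≠ 0 := by exact_mod_cast (one_pos.trans hy).ne'
  have hradial : ‖y - (‖y‖⁻¹ : ℂ) • y‖ = ‖y‖ - 1 := by
    have hscale : y - (‖y‖⁻¹ : ℂ) • y = ((‖y‖ - 1 : ℝ) : ℂ) • (‖y‖⁻¹ : ℂ) • y := by
      nth_rewrite 1 [← one_smul ℂ y]
      rw [← sub_smul, smul_smul]
      congr 1
      push_cast
      field_simp
    have hunit : ‖(‖y‖⁻¹ : ℂ) • y‖ = 1 :=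
      norm_smul_inv_norm (norm_pos_iff.mp (one_pos.trans hy))
    rw [hscale, norm_smul, hunit, Complex.norm_real, Real.norm_of_nonneg (by linarith), mul_one]
  have hsub := norm_sub_norm_le y u
  have htri := norm_add_le (u - y) (y - (‖y‖⁻¹ : ℂ) • y)
  rw [sub_add_sub_cancel, norm_sub_rev u y] at htri
  linarith

-- A functional supporting the ball at `y = u + h • P u` sees `P` at the normalization of `y`, where
-- the numerical radius applies, up to an error of second order in `h`.
lemma norm_add_smul_le_of_lipschitzOnWith (hK : ∀ x ∈ closedBall 0 1, ‖P x‖ ≤ K)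
    (hL : LipschitzOnWith L P (closedBall 0 1)) {u : X} (hu : u ∈ closedBall 0 1) (h : ℂ) :
    ‖u + h • P u‖ ≤ 1 + ‖h‖ * (numericalRadius P + L * (2 * (‖h‖ * K))) := by
  have hK0 : 0 ≤ K := (norm_nonneg _).trans (hK u hu)
  have hV0 := numericalRadius_nonneg P
  set y := u + h • P u with hy
  rcases le_or_gt ‖y‖ 1 with hy1 | hy1
  · exact hy1.trans (le_add_of_nonneg_right (by positivity))
  have hy0 : ‖y‖ ≠ 0 := (one_pos.trans hy1).ne'
  have hu1 : ‖u‖ ≤ 1 := mem_closedBall_zero_iff.mp hu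
  obtain ⟨f, hf, hfy⟩ := exists_dual_vector ℂ y hy0
  set w := (‖y‖⁻¹ : ℂ) • y
  have hw : ‖w‖ = 1 := norm_smul_inv_norm (norm_ne_zero_iff.mp hy0)
  have hfw : f w = 1 := by
    rw [map_smul, hfy, smul_eq_mul]
    exact inv_mul_cancel₀ (by exact_mod_cast hy0)
  have hstep : ‖y - u‖ ≤ ‖h‖ * K := by
    rw [hy, add_sub_cancel_left, norm_smul]
    exact mul_le_mul_of_nonneg_left (hK u hu) (norm_nonneg h)
  have hPu : ‖f (P u - P w)‖ ≤ L * (2 * (‖h‖ * K)) := calc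
    ‖f (P u - P w)‖ ≤ ‖P u - P w‖ := norm_apply_le_of_norm_eq_one hf _
    _ ≤ L * ‖u - w‖ := hL.norm_sub_le hu (mem_closedBall_zero_iff.mpr hw.le)
    _ ≤ L * (2 * (‖h‖ * K)) := by
      gcongr
      exact (norm_sub_inv_norm_smul_le hu1 hy1).trans (by gcongr)
  have hPw : ‖f (P w)‖ ≤ numericalRadius P :=
    norm_apply_le_numericalRadius
      (fun v hv => hK v (mem_closedBall_zero_iff.mpr hv.le)) hw hfw hf
  calc ‖y‖ = ‖f y‖ := by rw [hfy]; simp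
    _ = ‖f u + h * (f (P w) + f (P u - P w))‖ := by
      rw [← map_add, add_sub_cancel, hy, map_add, map_smul, smul_eq_mul]
    _ ≤ ‖f u‖ + ‖h‖ * (‖f (P w)‖ + ‖f (P u - P w)‖) := by
      refine (norm_add_le _ _).trans ?_
      rw [norm_mul]
      gcongr
      exact norm_add_le _ _
    _ ≤ 1 + ‖h‖ * (numericalRadius P + L * (2 * (‖h‖ * K))) := by
      gcongr
      exact (norm_apply_le_of_norm_eq_one hf u).trans hu1

end NumericalRange

section EulerScheme

/-- A continuous-time bound on `[0, τ]` for the explicit Euler schemes of `w' = w ^ m`, `w 0 = 1`: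
on an interval `[s, t]` it grows by at least the Euler step taken from its value at `s`. -/
structure IsEulerSupersolution (m : ℕ) (τ : ℝ) (φ : ℝ → ℝ) : Prop where
  one_le_zero : 1 ≤ φ 0
  add_mul_pow_le : ∀ {s t}, 0 ≤ s → s ≤ t → t ≤ τ → φ s + (t - s) * φ s ^ m ≤ φ t

namespace IsEulerSupersolution

variable {m : ℕ} {τ s : ℝ} {φ : ℝ → ℝ}

lemma one_le (hφ : IsEulerSupersolution m τ φ) (hs : 0 ≤ s) (hsτ : s ≤ τ) : 1 ≤ φ s := by
  have hstep := hφ.add_mul_pow_le le_rfl hs hsτ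
  have hinc : 0 ≤ (s - 0) * φ 0 ^ m :=
    mul_nonneg (by linarith) (pow_nonneg (zero_le_one.trans hφ.one_le_zero) m)
  linarith [hφ.one_le_zero]

lemma le_last (hφ : IsEulerSupersolution m τ φ) (hs : 0 ≤ s) (hsτ : s ≤ τ) : φ s ≤ φ τ := by
  have hstep := hφ.add_mul_pow_le hs hsτ le_rfl
  have hinc : 0 ≤ (τ - s) * φ s ^ m :=
    mul_nonneg (by linarith) (pow_nonneg (zero_le_one.trans (hφ.one_le hs hsτ)) m)
  linarith

end IsEulerSupersolution

lemma isEulerSupersolution_exp (τ : ℝ) : IsEulerSupersolution 1 τ Real.exp := by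
  refine ⟨Real.exp_zero.ge, fun {s t} _ _ _ => ?_⟩
  calc Real.exp s + (t - s) * Real.exp s ^ 1 = Real.exp s * ((t - s) + 1) := by ring
    _ ≤ Real.exp s * Real.exp (t - s) := by gcongr; exact Real.add_one_le_exp _
    _ = Real.exp t := by rw [← Real.exp_add, add_sub_cancel]

lemma one_add_le_rpow_neg_inv {p y : ℝ} (hp : 0 < p) (hy : p * y < 1) :
    1 + y ≤ (1 - p * y) ^ (-p⁻¹) := by
  calc 1 + y ≤ Real.exp y := by linarith [Real.add_one_le_exp y]
    _ = Real.exp (-(p * y)) ^ (-p⁻¹) := by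
      rw [← Real.exp_mul]
      congr 1
      field_simp
    _ ≤ (1 - p * y) ^ (-p⁻¹) :=
      Real.rpow_le_rpow_of_nonpos (by linarith) (Real.one_sub_le_exp_neg _)
        (neg_nonpos.mpr (inv_pos.mpr hp).le)

-- The exact solution of `w' = w ^ (p + 1)`, `w 0 = 1`.
lemma isEulerSupersolution_rpow {p : ℕ} (hp : p ≠ 0) {τ : ℝ} (hτ : p * τ < 1) :
    IsEulerSupersolution (p + 1) τ fun t => (1 - p * t) ^ (-(p : ℝ)⁻¹) := by
  have hp0 : (0 : ℝ) < p := by exact_mod_cast hp.bot_lt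
  refine ⟨by simp, fun {s t} _ hst htτ => ?_⟩
  have hpt : p * t < 1 := (mul_le_mul_of_nonneg_left htτ hp0.le).trans_lt hτ
  have hps : 0 < 1 - p * s := by linarith [mul_le_mul_of_nonneg_left hst hp0.le]
  set φs := (1 - p * s) ^ (-(p : ℝ)⁻¹)
  have hpow : φs ^ p = (1 - p * s)⁻¹ := by
    rw [← Real.rpow_mul_natCast hps.le, neg_mul, inv_mul_cancel₀ hp0.ne', Real.rpow_neg_one]
  have hsplit : 1 - p * t = (1 - p * s) * (1 - p * ((t - s) / (1 - p * s))) := by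
    field_simp
    ring
  have hy : p * ((t - s) / (1 - p * s)) < 1 := by
    rw [← mul_div_assoc, div_lt_one hps]
    linarith
  calc φs + (t - s) * φs ^ (p + 1) = φs * (1 + (t - s) / (1 - p * s)) := by
        rw [pow_succ, hpow]
        ring
    _ ≤ φs * (1 - p * ((t - s) / (1 - p * s))) ^ (-(p : ℝ)⁻¹) := by
        gcongr
        exact one_add_le_rpow_neg_inv hp0 hy
    _ = (1 - p * t) ^ (-(p : ℝ)⁻¹) := by
        rw [hsplit, Real.mul_rpow hps.le (by linarith)]

variable {X : Type*} [NormedAddCommGroup X] [NormedSpace ℂ X] {P : X → X} {m : ℕ}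

/-- The `k`-th iterate of the explicit Euler scheme for `w' = P w` with complex step `h`, started
at `x`. -/
noncomputable def eulerIterate (P : X → X) (x : X) (k : ℕ) (h : ℂ) : X :=
  (fun w => w + h • P w)^[k] x

lemma eulerIterate_succ (P : X → X) (x : X) (k : ℕ) (h : ℂ) :
    eulerIterate P x (k + 1) h = eulerIterate P x k h + h • P (eulerIterate P x k h) :=
  Function.iterate_succ_apply' _ _ _

lemma eulerIterate_zero_step (P : X → X) (x : X) (k : ℕ) : eulerIterate P x k 0 = x := by
  induction k with
  | zero => rfl
  | succ k ih => rw [eulerIterate_succ, ih, zero_smul, add_zero]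

lemma differentiable_eulerIterate (hP : Differentiable ℂ P) (x : X) (k : ℕ) :
    Differentiable ℂ (eulerIterate P x k) := by
  induction k with
  | zero => exact differentiable_const x
  | succ k ih =>
    simp only [funext (eulerIterate_succ P x k)]
    exact ih.add (differentiable_id.smul (hP.comp ih))

lemma hasDerivAt_eulerIterate_zero (hP : Differentiable ℂ P) (x : X) (k : ℕ) :
    HasDerivAt (eulerIterate P x k) ((k : ℂ) • P x) 0 := by
  induction k with
  | zero => simpa using! hasDerivAt_const (0 : ℂ) x
  | succ k ih =>
    have hPk : HasDerivAt (fun h => P (eulerIterate P x k h)) _ 0 :=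
      (hP.comp (differentiable_eulerIterate hP x k) 0).hasDerivAt
    have hsucc := ih.add ((hasDerivAt_id (0 : ℂ)).smul hPk)
    simp only [funext (eulerIterate_succ P x k)]
    convert! hsucc using 1
    simp only [id, eulerIterate_zero_step, zero_smul, zero_add, Nat.cast_succ, add_smul]

lemma norm_eulerIterate_le {τ C δ η : ℝ} {φ : ℝ → ℝ} {h : ℂ}
    (hφ : IsEulerSupersolution m τ φ)
    (hstep : ∀ {a : ℝ} {x : X}, 0 < a → ‖x‖ ≤ a → ‖h‖ * a ^ m ≤ δ * a →
      ‖x + h • P x‖ ≤ a + C * ‖h‖ * a ^ m)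
    (hη : 0 ≤ η) (hCh : C * ‖h‖ ≤ η) (hhδ : ‖h‖ * φ τ ^ m ≤ δ) {x : X} (hx : ‖x‖ ≤ 1) (k : ℕ)
    (hk : k * η ≤ τ) : ‖eulerIterate P x k h‖ ≤ φ (k * η) := by
  induction k with
  | zero => simpa [eulerIterate] using hx.trans hφ.one_le_zero
  | succ k ih =>
    have hnext : (k + 1 : ℕ) * η - k * η = η := by push_cast; ring
    have hk0 : 0 ≤ k * η := by positivity
    have hkτ : k * η ≤ τ := by linarith
    have ha : 1 ≤ φ (k * η) := hφ.one_le hk0 hkτ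
    have hδ : 0 ≤ δ := (mul_nonneg (norm_nonneg h) (pow_nonneg
      (zero_le_one.trans (hφ.one_le (hk0.trans hkτ) le_rfl)) m)).trans hhδ
    have hsmall : ‖h‖ * φ (k * η) ^ m ≤ δ * φ (k * η) := calc
      ‖h‖ * φ (k * η) ^ m ≤ ‖h‖ * φ τ ^ m := by
        gcongr
        exact hφ.le_last hk0 hkτ
      _ ≤ δ * φ (k * η) := hhδ.trans (le_mul_of_one_le_right hδ ha)
    calc ‖eulerIterate P x (k + 1) h‖ ≤ φ (k * η) + C * ‖h‖ * φ (k * η) ^ m := by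
          rw [eulerIterate_succ]
          exact hstep (one_pos.trans_le ha) (ih hkτ) hsmall
      _ ≤ φ (k * η) + η * φ (k * η) ^ m := by gcongr
      _ ≤ φ ((k + 1 : ℕ) * η) := by
          simpa only [hnext] using hφ.add_mul_pow_le hk0 (by linarith) hk

namespace IsHomogPolynomial

lemma exists_norm_add_smul_le (hP : IsHomogPolynomial m P) {C : ℝ} (hC : numericalRadius P < C) :
    ∃ δ > 0, ∀ {a : ℝ} {x : X} {h : ℂ}, 0 < a → ‖x‖ ≤ a → ‖h‖ * a ^ m ≤ δ * a →
      ‖x + h • P x‖ ≤ a + C * ‖h‖ * a ^ m := by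
  obtain ⟨K, hK⟩ := hP.exists_norm_le 1
  obtain ⟨L, hL⟩ := hP.exists_lipschitzOnWith
  have hK0 : 0 ≤ K := (norm_nonneg _).trans (hK 0 (by simp))
  have hLK : 0 < L * (2 * K) + 1 := by positivity
  refine ⟨(C - numericalRadius P) / (L * (2 * K) + 1), div_pos (sub_pos.mpr hC) hLK,
    fun {a x h} ha hxa hh => ?_⟩
  have haC : (a : ℂ) ≠ 0 := by exact_mod_cast ha.ne'
  obtain ⟨u, rfl⟩ : ∃ u, (a : ℂ) • u = x := ⟨(a : ℂ)⁻¹ • x, smul_inv_smul₀ haC x⟩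
  have hu : u ∈ closedBall 0 1 := by
    rw [norm_smul, Complex.norm_real, Real.norm_of_nonneg ha.le] at hxa
    exact mem_closedBall_zero_iff.mpr (le_of_mul_le_mul_left (by linarith) ha)
  set h' : ℂ := h * a ^ m / a
  have hh' : ‖h'‖ = ‖h‖ * a ^ m / a := by
    simp [h', norm_pow, Complex.norm_real, abs_of_pos ha]
  have hsecond : L * (2 * K) * ‖h'‖ ≤ C - numericalRadius P := by
    have hδ : ‖h'‖ ≤ (C - numericalRadius P) / (L * (2 * K) + 1) := by
      rwa [hh', div_le_iff₀ ha]
    rw [le_div_iff₀ hLK] at hδ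
    linarith [norm_nonneg h']
  have hscale : (a : ℂ) • u + h • P ((a : ℂ) • u) = (a : ℂ) • (u + h' • P u) := by
    rw [hP.map_smul, smul_add, smul_smul, smul_smul, mul_div_cancel₀ _ haC]
  calc ‖(a : ℂ) • u + h • P ((a : ℂ) • u)‖ = a * ‖u + h' • P u‖ := by
        rw [hscale, norm_smul, Complex.norm_real, Real.norm_of_nonneg ha.le]
    _ ≤ a * (1 + ‖h'‖ * (numericalRadius P + L * (2 * (‖h'‖ * K)))) := by
        gcongr
        exact norm_add_smul_le_of_lipschitzOnWith hK hL hu h'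
    _ ≤ a * (1 + ‖h'‖ * C) := by
        gcongr
        linarith
    _ = a + C * ‖h‖ * a ^ m := by
        rw [hh']
        field_simp

lemma eventually_norm_eulerIterate_le (hP : IsHomogPolynomial m P) {τ C : ℝ} {φ : ℝ → ℝ}
    (hφ : IsEulerSupersolution m τ φ) (hτ : 0 < τ) (hC : numericalRadius P < C) {x : X}
    (hx : ‖x‖ ≤ 1) : ∀ᶠ N : ℕ in Filter.atTop, ∀ h : ℂ, C * ‖h‖ ≤ τ / N →
      ‖eulerIterate P x N h‖ ≤ φ τ := by
  obtain ⟨δ, hδ, hstep⟩ := hP.exists_norm_add_smul_le hC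
  have hC0 : 0 < C := (numericalRadius_nonneg P).trans_lt hC
  have hlim := (tendsto_const_div_atTop_nhds_zero_nat τ).mul_const (φ τ ^ m)
  rw [zero_mul] at hlim
  filter_upwards [hlim.eventually_le_const (mul_pos hC0 hδ), Filter.eventually_gt_atTop 0]
    with N hNδ hN h hh
  have hN0 : (0 : ℝ) < N := by exact_mod_cast hN
  have hφτ : 0 ≤ φ τ := zero_le_one.trans (hφ.one_le hτ.le le_rfl)
  have hhδ : ‖h‖ * φ τ ^ m ≤ δ := by
    refine le_of_mul_le_mul_left ?_ hC0
    rw [← mul_assoc]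
    exact (mul_le_mul_of_nonneg_right hh (pow_nonneg hφτ m)).trans hNδ
  have hend : N * (τ / N) = τ := mul_div_cancel₀ τ hN0.ne'
  simpa only [hend] using
    norm_eulerIterate_le hφ hstep (by positivity) hh hhδ hx N hend.le

lemma norm_le_of_isEulerSupersolution (hP : IsHomogPolynomial m P) {τ : ℝ} {φ : ℝ → ℝ}
    (hφ : IsEulerSupersolution m τ φ) (hτ : 0 < τ) {x : X} (hx : ‖x‖ ≤ 1) :
    ‖P x‖ ≤ φ τ / τ * numericalRadius P := by
  have hφτ : 0 < φ τ := one_pos.trans_le (hφ.one_le hτ.le le_rfl)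
  rw [← div_le_iff₀' (div_pos hφτ hτ)]
  refine le_of_forall_gt_imp_ge_of_dense fun C hC => ?_
  have hC0 : 0 < C := (numericalRadius_nonneg P).trans_lt hC
  obtain ⟨N, hbound, hN⟩ := ((hP.eventually_norm_eulerIterate_le hφ hτ hC hx).and
    (Filter.eventually_gt_atTop 0)).exists
  have hN0 : (0 : ℝ) < N := by exact_mod_cast hN
  have hcauchy := Complex.norm_deriv_le_of_forall_mem_sphere_norm_le
    (show 0 < τ / N / C by positivity)
    (differentiable_eulerIterate hP.differentiable x N).diffContOnCl fun h hh => hbound h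
      (by rw [mem_sphere_zero_iff_norm.mp hh, mul_div_cancel₀ _ hC0.ne'])
  rw [(hasDerivAt_eulerIterate_zero hP.differentiable x N).deriv, norm_smul, Complex.norm_natCast]
    at hcauchy
  rw [div_le_iff₀' (div_pos hφτ hτ)]
  refine le_of_mul_le_mul_left (hcauchy.trans_eq ?_) hN0
  field_simp

lemma norm_le_exp_one_mul_numericalRadius (hP : IsHomogPolynomial 1 P) (x : X) :
    ‖P x‖ ≤ Real.exp 1 * numericalRadius P * ‖x‖ := by
  simpa using hP.norm_le_mul_norm_pow (fun _ hu =>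
    hP.norm_le_of_isEulerSupersolution (isEulerSupersolution_exp 1) one_pos hu) x

lemma norm_le_mul_rpow_mul_numericalRadius (hP : IsHomogPolynomial m P) (hm : 2 ≤ m) (x : X) :
    ‖P x‖ ≤ m * (m : ℝ) ^ (1 / (m - 1 : ℝ)) * numericalRadius P * ‖x‖ ^ m := by
  refine hP.norm_le_mul_norm_pow (fun u hu => ?_) x
  obtain ⟨p, rfl⟩ := Nat.exists_eq_add_of_le' (one_le_two.trans hm)
  have hp1 : (0 : ℝ) < p + 1 := by positivity
  have hlast : 1 - p * ((p : ℝ) + 1)⁻¹ = ((p : ℝ) + 1)⁻¹ := by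
    field_simp
    ring
  have hφ := isEulerSupersolution_rpow (p := p) (by omega) (τ := ((p : ℝ) + 1)⁻¹)
    (by linarith [inv_pos.mpr hp1])
  have hle := hP.norm_le_of_isEulerSupersolution hφ (inv_pos.mpr hp1) hu
  rw [Nat.cast_add_one, add_sub_cancel_right, one_div]
  rwa [hlast, Real.inv_rpow hp1.le, Real.rpow_neg hp1.le, inv_inv, div_inv_eq_mul,
    mul_comm (_ ^ _)] at hle

end IsHomogPolynomial

end EulerScheme

section HarrisConstant

lemma log_two_add_div_le_log {x : ℝ} (hx : 2 ≤ x) :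
    Real.log 2 + 2 * (x - 2) / (x + 2) ≤ Real.log x := by
  have hpade := Real.le_log_one_add_of_nonneg (x := (x - 2) / 2) (by linarith)
  have hsum : 1 + (x - 2) / 2 = x / 2 := by ring
  have hfrac : 2 * ((x - 2) / 2) / ((x - 2) / 2 + 2) = 2 * (x - 2) / (x + 2) := by
    have hx2 : x + 2 ≠ 0 := by linarith
    have hden : (x - 2) / 2 + 2 = (x + 2) / 2 := by ring
    rw [hden]
    field_simp
  rw [hsum, hfrac, Real.log_div (by linarith) two_ne_zero] at hpade
  linarith

lemma one_add_mul_sub_two_pos {x : ℝ} (hx : 2 ≤ x) : 0 < 1 + (1 - Real.log 2) * (x - 2) := by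
  have hslope : 0 < 1 - Real.log 2 := by linarith [Real.log_two_lt_d9]
  exact add_pos_of_pos_of_nonneg one_pos (mul_nonneg hslope.le (by linarith))

lemma hasDerivAt_mul_log_div_sub_one {x : ℝ} (hx : 1 < x) :
    HasDerivAt (fun y => y * Real.log y / (y - 1)) ((x - 1 - Real.log x) / (x - 1) ^ 2) x := by
  convert! (Real.hasDerivAt_mul_log (by linarith)).div ((hasDerivAt_id x).sub_const 1)
    (sub_pos.mpr hx).ne' using 2
  simp only [id]
  ring

lemma sub_log_div_sq_le {x : ℝ} (hx : 2 ≤ x) :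
    (x - 1 - Real.log x) / (x - 1) ^ 2 ≤ (1 - Real.log 2) / (1 + (1 - Real.log 2) * (x - 2)) := by
  have hlower := Real.log_two_gt_d9
  have hupper := Real.log_two_lt_d9
  have hlog := log_two_add_div_le_log hx
  have hden := one_add_mul_sub_two_pos hx
  have hx1 : 0 < x - 1 := by linarith
  have hx2 : 0 < x + 2 := by linarith
  rw [div_le_div_iff₀ (by positivity) hden]
  set L := Real.log 2
  have hquad : L ^ 2 * (x + 2) ≤ 2 * (1 + (1 - L) * (x - 2)) := by nlinarith
  have hgap : L * (x - 1) ≤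
      (L + 2 * (x - 2) / (x + 2)) * (1 + (1 - L) * (x - 2)) := by
    rw [← sub_nonneg]
    have hfactor : (L + 2 * (x - 2) / (x + 2)) * (1 + (1 - L) * (x - 2)) - L * (x - 1) =
        (x - 2) * (2 * (1 + (1 - L) * (x - 2)) - L ^ 2 * (x + 2)) / (x + 2) := by
      field_simp
      ring
    rw [hfactor]
    exact div_nonneg (mul_nonneg (by linarith) (by linarith)) hx2.le
  linarith [mul_le_mul_of_nonneg_right hlog hden.le]

lemma mul_log_div_sub_one_le {x : ℝ} (hx : 2 ≤ x) :
    x * Real.log x / (x - 1) ≤ Real.log (4 * (1 + (1 - Real.log 2) * (x - 2))) := by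
  have hderiv : ∀ y ∈ Set.Ici (2 : ℝ), HasDerivAt
      (fun y => Real.log (1 + (1 - Real.log 2) * (y - 2)) - y * Real.log y / (y - 1))
      ((1 - Real.log 2) / (1 + (1 - Real.log 2) * (y - 2)) -
        (y - 1 - Real.log y) / (y - 1) ^ 2) y := by
    intro y hy
    have haffine : HasDerivAt (fun y => 1 + (1 - Real.log 2) * (y - 2)) (1 - Real.log 2) y := by
      simpa using (((hasDerivAt_id y).sub_const 2).const_mul (1 - Real.log 2)).const_add 1
    exact (haffine.log (one_add_mul_sub_two_pos hy).ne').sub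
      (hasDerivAt_mul_log_div_sub_one (one_lt_two.trans_le hy))
  have hmono := monotoneOn_of_deriv_nonneg (convex_Ici 2)
    (fun y hy => (hderiv y hy).continuousAt.continuousWithinAt)
    (fun y hy => (hderiv y (interior_subset hy)).differentiableAt.differentiableWithinAt)
    (fun y hy => by
      rw [(hderiv y (interior_subset hy)).deriv]
      exact sub_nonneg.mpr (sub_log_div_sq_le (interior_subset hy)))
  have hle := hmono Set.self_mem_Ici (Set.mem_Ici.mpr hx) hx
  have hlog4 : Real.log 4 = 2 * Real.log 2 := by
    rw [show (4 : ℝ) = 2 ^ 2 by norm_num, Real.log_pow, Nat.cast_ofNat]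
  rw [Real.log_mul four_ne_zero (one_add_mul_sub_two_pos hx).ne', hlog4]
  norm_num at hle
  linarith

-- The right-hand side is the tangent line of `x ↦ x ^ (x / (x - 1))` at `2`.
lemma mul_rpow_one_div_sub_one_le {x : ℝ} (hx : 2 ≤ x) :
    x * x ^ (1 / (x - 1)) ≤ 4 * (1 + (1 - Real.log 2) * (x - 2)) := by
  have hx0 : 0 < x := by linarith
  have hx1 : x - 1 ≠ 0 := by linarith
  have hpow := Real.rpow_pos_of_pos hx0 (1 / (x - 1))
  have hlog : Real.log (x * x ^ (1 / (x - 1))) = x * Real.log x / (x - 1) := by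
    rw [Real.log_mul hx0.ne' hpow.ne', Real.log_rpow hx0]
    field_simp
    ring
  rw [← Real.log_le_log_iff (mul_pos hx0 hpow) (mul_pos four_pos (one_add_mul_sub_two_pos hx)),
    hlog]
  exact mul_log_div_sub_one_le hx

end HarrisConstant

lemma hasSum_affine_geometric (A C : ℝ) {ρ : ℝ} (hρ0 : 0 ≤ ρ) (hρ1 : ρ < 1) :
    HasSum (fun k : ℕ => (4 * (1 + (1 - Real.log 2) * k) * A + if k = 0 then C else 0) *
      ρ ^ (k + 2))
      (C * ρ ^ 2 + 4 * A * ρ ^ 2 * (1 - ρ * Real.log 2) / (1 - ρ) ^ 2) := by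
  have hgeom : HasSum (fun k : ℕ => ρ ^ k) (1 - ρ)⁻¹ := hasSum_geometric_of_lt_one hρ0 hρ1
  have harith : HasSum (fun k : ℕ => (k : ℝ) * ρ ^ k) (ρ / (1 - ρ) ^ 2) :=
    hasSum_coe_mul_geometric_of_norm_lt_one (by rwa [Real.norm_of_nonneg hρ0])
  have hfirst : HasSum (fun k : ℕ => if k = 0 then C * ρ ^ 2 else 0) (C * ρ ^ 2) :=
    hasSum_ite_eq 0 _
  convert! hfirst.add ((hgeom.add (harith.mul_left (1 - Real.log 2))).mul_left
    (4 * A * ρ ^ 2)) using 2 with k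
  · split_ifs with hk
    · simp only [hk]
      ring
    · ring
  · have : 1 - ρ ≠ 0 := by linarith
    field_simp
    ring

section Generator

variable {X : Type*} [NormedAddCommGroup X] [NormedSpace ℂ X]

/-- An infinitesimal generator on the open unit ball of `X`, characterized by its growth along the
supporting functionals `z⋆` with `z⋆ z = ‖z‖ ^ 2 = ‖z⋆‖ ^ 2`. -/
structure IsInfinitesimalGenerator (G : X → X) : Prop where
  differentiableOn : DifferentiableOn ℂ G (ball 0 1)
  re_le : ∀ z ∈ ball (0 : X) 1, ∀ zs : X →L[ℂ] ℂ, zs z = (‖z‖ ^ 2 : ℂ) → ‖zs‖ = ‖z‖ →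
    (zs (G z)).re ≤ (zs (G 0)).re * (1 - ‖z‖ ^ 2)

namespace IsInfinitesimalGenerator

variable {q : ℂ → ℂ} {G : X → X} {v : X} {f : X →L[ℂ] ℂ}

lemma re_dslope_add_conj_mul_nonpos (hq : IsInfinitesimalGenerator q) {ζ : ℂ}
    (hζ : ζ ∈ ball 0 1) (hζ0 : ζ ≠ 0) : (dslope q 0 ζ + conj (q 0) * ζ).re ≤ 0 := by
  have hgrowth := hq.re_le ζ hζ (conj ζ • ContinuousLinearMap.id ℂ ℂ)
    (by simp [conj_mul']) (by simp [norm_smul])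
  simp only [smul_apply, ContinuousLinearMap.id_apply, smul_eq_mul] at hgrowth
  have hpos : 0 < ‖ζ‖ ^ 2 := by positivity
  have hdslope : conj ζ * (q ζ - q 0) = ((‖ζ‖ ^ 2 : ℝ) : ℂ) * dslope q 0 ζ := by
    rw [dslope_of_ne _ hζ0, slope_def_field, ofReal_pow, ← conj_mul', sub_zero]
    field_simp
  have hre := congrArg re hdslope
  have hconj : (conj (q 0) * ζ).re = (conj ζ * q 0).re := by
    rw [← conj_re (conj ζ * q 0), map_mul, conj_conj, mul_comm]
  rw [mul_sub, sub_re, re_ofReal_mul] at hre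
  rw [add_re, hconj]
  nlinarith

lemma norm_taylorCoeff_add_two_le (hq : IsInfinitesimalGenerator q) (k : ℕ) :
    ‖taylorCoeff q (k + 2) + if k = 0 then conj (q 0) else 0‖ ≤ -2 * (deriv q 0).re := by
  have hnhds : ball (0 : ℂ) 1 ∈ 𝓝 0 := ball_mem_nhds 0 one_pos
  have hd : DifferentiableOn ℂ (fun ζ => -(dslope q 0 ζ + conj (q 0) * ζ)) (ball 0 1) :=
    (((Complex.differentiableOn_dslope hnhds).mpr hq.differentiableOn).add
      (by fun_prop)).neg
  have hle := norm_taylorCoeff_le_two_mul_re hd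
    (fun ζ hζ hζ0 => by
      rw [neg_re, neg_nonneg]
      exact hq.re_dslope_add_conj_mul_nonpos hζ hζ0) k.succ_ne_zero
  rwa [taylorCoeff_fun_neg, norm_neg, taylorCoeff_dslope_add_mul
    (hq.differentiableOn.analyticAt hnhds), dslope_same, mul_zero, add_zero, neg_re, mul_neg,
    ← neg_mul] at hle

lemma comp_smul (hG : IsInfinitesimalGenerator G) (hv : ‖v‖ = 1) (hfv : f v = 1) (hf : ‖f‖ = 1) :
    IsInfinitesimalGenerator fun ζ : ℂ => f (G (ζ • v)) := by
  have hmaps : Set.MapsTo (fun ζ : ℂ => ζ • v) (ball 0 1) (ball 0 1) := fun ζ hζ => by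
    rwa [mem_ball_zero_iff, norm_smul, hv, mul_one, ← mem_ball_zero_iff]
  refine ⟨f.differentiable.comp_differentiableOn
    (hG.differentiableOn.comp (by fun_prop) hmaps), fun ζ hζ ζs hζsζ hζs => ?_⟩
  have hline (w : ℂ) : ζs.comp f (w • v) = ζs w := by
    rw [ContinuousLinearMap.comp_apply, map_smul, hfv, smul_eq_mul, mul_one]
  have hnorm : ‖ζ • v‖ = ‖ζ‖ := by rw [norm_smul, hv, mul_one]
  have hcomp : ‖ζs.comp f‖ = ‖ζs‖ := by
    refine le_antisymm ((ζs.opNorm_comp_le f).trans_eq (by rw [hf, mul_one])) ?_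
    refine ζs.opNorm_le_bound (norm_nonneg _) fun w => ?_
    have hle := (ζs.comp f).le_opNorm (w • v)
    rwa [norm_smul, hv, mul_one, hline] at hle
  have hre := hG.re_le (ζ • v) (hmaps hζ) (ζs.comp f) (by rw [hline, hζsζ, hnorm])
    (by rw [hcomp, hζs, hnorm])
  simpa [hnorm] using hre

lemma differentiableAt_zero (hG : IsInfinitesimalGenerator G) : DifferentiableAt ℂ G 0 :=
  hG.differentiableOn.differentiableAt (ball_mem_nhds 0 one_pos)

variable [CompleteSpace X]

lemma norm_apply_homogPart_add_two_le (hG : IsInfinitesimalGenerator G) (hv : ‖v‖ = 1)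
    (hfv : f v = 1) (hf : ‖f‖ = 1) (k : ℕ) :
    ‖f (homogPart G (k + 2) v)‖ ≤
      -2 * (f (fderiv ℂ G 0 v)).re + if k = 0 then ‖G 0‖ else 0 := by
  have hline : AnalyticAt ℂ (fun ζ : ℂ => G (ζ • v)) 0 := by
    refine DifferentiableOn.analyticAt ?_ (closedBall_mem_nhds 0 one_half_pos)
    exact differentiableOn_comp_smul hG.differentiableOn (by rw [hv]; norm_num)
  have hcoeff (n : ℕ) : taylorCoeff (fun ζ : ℂ => f (G (ζ • v))) n = f (homogPart G n v) :=
    taylorCoeff_continuousLinearMap_comp f hline n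
  have hle := (hG.comp_smul hv hfv hf).norm_taylorCoeff_add_two_le k
  rw [hcoeff, ← taylorCoeff_one, hcoeff, homogPart_one hG.differentiableAt_zero, zero_smul] at hle
  split_ifs at hle ⊢
  · have hconj : ‖conj (f (G 0))‖ ≤ ‖G 0‖ := by
      rw [RCLike.norm_conj]
      exact norm_apply_le_of_norm_eq_one hf (G 0)
    linarith [norm_le_add_norm_add (f (homogPart G (k + 2) v)) (conj (f (G 0)))]
  · simpa using hle

lemma lowerNumericalBound_fderiv_nonpos (hG : IsInfinitesimalGenerator G) :
    lowerNumericalBound (fderiv ℂ G 0) ≤ 0 := by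
  refine Real.sInf_nonpos ?_
  rintro _ ⟨v, f, hv, hfv, hf, rfl⟩
  have hle := (norm_nonneg _).trans (hG.norm_apply_homogPart_add_two_le hv hfv hf 1)
  simp only [one_ne_zero, if_false] at hle
  linarith

lemma numericalRadius_homogPart_add_two_le (hG : IsInfinitesimalGenerator G) (k : ℕ) :
    numericalRadius (homogPart G (k + 2)) ≤
      -2 * lowerNumericalBound (fderiv ℂ G 0) + if k = 0 then ‖G 0‖ else 0 := by
  have hm := hG.lowerNumericalBound_fderiv_nonpos
  have hnonneg : 0 ≤ if k = 0 then ‖G 0‖ else 0 := by split_ifs <;> positivity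
  refine numericalRadius_le (by linarith) fun v f hv hfv hf => ?_
  have hle := lowerNumericalBound_le_re_apply
    (fun w hw => (fderiv ℂ G 0).unit_le_opNorm w hw.le) hv hfv hf
  linarith [hG.norm_apply_homogPart_add_two_le hv hfv hf k]

lemma norm_homogPart_add_two_le (hG : IsInfinitesimalGenerator G) (k : ℕ) (z : X) :
    ‖homogPart G (k + 2) z‖ ≤
      (4 * (1 + (1 - Real.log 2) * k) * (-2 * lowerNumericalBound (fderiv ℂ G 0)) +
        if k = 0 then 4 * ‖G 0‖ else 0) * ‖z‖ ^ (k + 2) := by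
  have hk : (2 : ℝ) ≤ (k + 2 : ℕ) := by exact_mod_cast le_add_self
  have hharris := (isHomogPolynomial_homogPart one_pos hG.differentiableOn
    (k + 2)).norm_le_mul_rpow_mul_numericalRadius le_add_self z
  refine hharris.trans ?_
  gcongr
  calc _ ≤ 4 * (1 + (1 - Real.log 2) * ((k + 2 : ℕ) - 2)) *
        (-2 * lowerNumericalBound (fderiv ℂ G 0) + if k = 0 then ‖G 0‖ else 0) :=
        mul_le_mul (mul_rpow_one_div_sub_one_le hk) (hG.numericalRadius_homogPart_add_two_le k)
          (numericalRadius_nonneg _) (mul_pos four_pos (one_add_mul_sub_two_pos hk)).le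
    _ = _ := by
        rcases eq_or_ne k 0 with rfl | hk0
        · simp [mul_add]
        · simp [hk0]

lemma norm_sub_le (hG : IsInfinitesimalGenerator G) {z : X} (hz : z ∈ ball 0 1) :
    ‖G z - G 0‖ ≤ 4 * ‖z‖ ^ 2 * ‖G 0‖ + Real.exp 1 * ‖z‖ * numericalRadius (fderiv ℂ G 0)
      - 8 * lowerNumericalBound (fderiv ℂ G 0) * ‖z‖ ^ 2 * (1 - ‖z‖ * Real.log 2)
        / (1 - ‖z‖) ^ 2 := by
  have htail : HasSum (fun k => homogPart G (k + 2) z) (G z - G 0 - fderiv ℂ G 0 z) := by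
    simpa [Finset.sum_range_succ, homogPart_one hG.differentiableAt_zero, sub_sub] using
      (hasSum_nat_add_iff' 2).mpr (hasSum_homogPart hG.differentiableOn hz)
  have hhigher := htail.norm_le_of_bounded (hasSum_affine_geometric _ _ (norm_nonneg z)
    (mem_ball_zero_iff.mp hz)) fun k => hG.norm_homogPart_add_two_le k z
  have hlinear := (isHomogPolynomial_one (fderiv ℂ G 0)).norm_le_exp_one_mul_numericalRadius z
  have htri := norm_add_le (G z - G 0 - fderiv ℂ G 0 z) (fderiv ℂ G 0 z)
  rw [sub_add_cancel] at htri
  refine (htri.trans (add_le_add hhigher hlinear)).trans_eq ?_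
  ring

lemma exists_norm_le (hG : IsInfinitesimalGenerator G) {r : ℝ} (hr : r < 1) :
    ∃ M, ∀ z, ‖z‖ ≤ r → ‖G z‖ ≤ M := by
  set V := numericalRadius (fderiv ℂ G 0)
  set m := lowerNumericalBound (fderiv ℂ G 0)
  have hcont : ContinuousOn (fun ρ : ℝ => 4 * ρ ^ 2 * ‖G 0‖ + Real.exp 1 * ρ * V
      - 8 * m * ρ ^ 2 * (1 - ρ * Real.log 2) / (1 - ρ) ^ 2) (Set.Icc 0 r) := by
    have hne : ∀ ρ ∈ Set.Icc 0 r, (1 - ρ) ^ 2 ≠ 0 := fun ρ hρ =>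
      pow_ne_zero 2 (sub_pos.mpr (hρ.2.trans_lt hr)).ne'
    fun_prop (disch := assumption)
  obtain ⟨C, hC⟩ := isCompact_Icc.bddAbove_image hcont
  refine ⟨C + ‖G 0‖, fun z hz => ?_⟩
  have hle := hG.norm_sub_le (mem_ball_zero_iff.mpr (hz.trans_lt hr))
  have hbound := hC (Set.mem_image_of_mem _ (Set.mem_Icc.mpr ⟨norm_nonneg z, hz⟩))
  have htri := norm_le_norm_sub_add (G z) (G 0)
  exact htri.trans (by gcongr; exact hle.trans hbound)

end IsInfinitesimalGenerator

end Generator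

theorem stmt9 {X : Type*} [NormedAddCommGroup X] [NormedSpace ℂ X] [CompleteSpace X]
    (G : X → X) (hG : DifferentiableOn ℂ G (ball 0 1))
    (hgen : ∀ z ∈ ball (0:X) 1, ∀ zs : X →L[ℂ] ℂ,
      zs z = (‖z‖ ^ 2 : ℂ) → ‖zs‖ = ‖z‖ →
      (zs (G z)).re ≤ (zs (G 0)).re * (1 - ‖z‖ ^ 2)) :
    (∀ z ∈ ball (0:X) 1,
      ‖G z - G 0‖ ≤ 4 * ‖z‖ ^ 2 * ‖G 0‖
        + Real.exp 1 * ‖z‖ *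
          sSup {x : ℝ | ∃ (v : X) (vs : X →L[ℂ] ℂ), ‖v‖ = 1 ∧ vs v = 1 ∧ ‖vs‖ = 1 ∧
            x = ‖vs (fderiv ℂ G 0 v)‖}
        - 8 * sInf {x : ℝ | ∃ (v : X) (vs : X →L[ℂ] ℂ), ‖v‖ = 1 ∧ vs v = 1 ∧ ‖vs‖ = 1 ∧
            x = (vs (fderiv ℂ G 0 v)).re}
          * ‖z‖ ^ 2 * (1 - ‖z‖ * Real.log 2) / (1 - ‖z‖) ^ 2) ∧
    ∀ r : ℝ, r < 1 → ∃ M : ℝ, ∀ z : X, ‖z‖ ≤ r → ‖G z‖ ≤ M := by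
  have hgenerator : IsInfinitesimalGenerator G := ⟨hG, hgen⟩
  exact ⟨fun z hz => hgenerator.norm_sub_le hz, fun r hr => hgenerator.exists_norm_le hr⟩
end
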